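/- arXiv:2202.04008 — 5 statements merged into one kernel-verified Lean document; each statement's English description precedes it below -/
import Mathlib

section
/- Let λ be a Borel probability measure on [0,1] and let 𝒫¹ and 𝒫² be two sequences of partitions that are log-balanced a.e. with respect to λ, with weight functions f₁ and f₂ respectively. Assume: (i) for every δ > 0, ∑_{n=1}^∞ e^{−δ f₁(n)} < ∞; (ii) f₂ is nondecreasing; (iii) f₂(n+1) − f₂(n) = o(f₂(n)) as n → ∞. Then f₂(L_n(x,𝒫¹,𝒫²))/f₁(n) → 1 as n → ∞ for λ-almost every x. -/
open MeasureTheory Filter Set Asymptotics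

noncomputable section

/-- A topological partition of `[0,1]`: an (automatically at most countable) collection of
pairwise disjoint nonempty open subintervals of `[0,1]` whose closures cover `[0,1]`. -/
def IsTopPartition (P : Set (Set ℝ)) : Prop :=
  P.Countable ∧
  (∀ I ∈ P, ∃ a b : ℝ, a < b ∧ 0 ≤ a ∧ b ≤ 1 ∧ I = Set.Ioo a b) ∧
  P.PairwiseDisjoint id ∧
  (⋃ I ∈ P, closure I) = Set.Icc (0 : ℝ) 1

/-- The set `E^Ps` of endpoints of the intervals of the partitions of the sequence `Ps`:
the points of `[0,1]` not covered by the open intervals of some partition. -/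
def endpointSet (Ps : ℕ → Set (Set ℝ)) : Set ℝ :=
  ⋃ n, (Set.Icc (0 : ℝ) 1 \ ⋃₀ Ps n)

/-- `I_n^Ps(x)`: the unique interval of the partition `P` containing `x`
(the empty set if there is none). -/
def cell (P : Set (Set ℝ)) (x : ℝ) : Set ℝ :=
  ⋃₀ {I | I ∈ P ∧ x ∈ I}

/-- A sequence of partitions is self-refining if every interval at depth `n+1` is contained
in an interval at depth `n`. -/
def SelfRefining (Ps : ℕ → Set (Set ℝ)) : Prop :=
  ∀ n, ∀ I ∈ Ps (n + 1), ∃ J ∈ Ps n, I ⊆ J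

/-- Strictly self-refining: self-refining with `P_{n+1} ≠ P_n` for all `n`. -/
def StrictSelfRefining (Ps : ℕ → Set (Set ℝ)) : Prop :=
  SelfRefining Ps ∧ ∀ n, Ps (n + 1) ≠ Ps n

/-- `Ps` is log-balanced a.e. with respect to `lam` with weight function `f`. -/
def LogBalancedAE (lam : Measure ℝ) (Ps : ℕ → Set (Set ℝ)) (f : ℕ → ℝ) : Prop :=
  lam (endpointSet Ps) = 0 ∧ Tendsto f atTop atTop ∧
    ∀ᵐ x ∂lam,
      Tendsto (fun n => -Real.log ((lam (cell (Ps n) x)).toReal) / f n) atTop (nhds 1)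

/-- `Ps` is log-balanced in measure with respect to `lam` with weight function `f`. -/
def LogBalancedInMeasure (lam : Measure ℝ) (Ps : ℕ → Set (Set ℝ)) (f : ℕ → ℝ) : Prop :=
  lam (endpointSet Ps) = 0 ∧ Tendsto f atTop atTop ∧
    TendstoInMeasure lam
      (fun n x => -Real.log ((lam (cell (Ps n) x)).toReal) / f n) atTop (fun _ => 1)

/-- The Lochs index `L_n(x, Ps¹, Ps²)`. -/
def lochsIndex (P1 P2 : ℕ → Set (Set ℝ)) (n : ℕ) (x : ℝ) : ℕ :=
  sSup {ℓ : ℕ | cell (P1 n) x ⊆ cell (P2 ℓ) x}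

/-- The generalized inverse `f^{[-1]}(y) = min {n : f n ≥ y}` of a weight function. -/
def weightInv (f : ℕ → ℝ) (y : ℝ) : ℕ := sInf {n : ℕ | y ≤ f n}

/-!
Fix `0 < a < 1` and let `m n` be the first index with `f₂ (m n) ≥ a f₁ n`; the growth condition on
`f₂` makes `f₂ (m n) ~ a f₁ n`. Hence, for almost every `x` and large `n`, the cell of `x` in
`P1 n` has mass about `exp (-f₁ n)`, while its cell in `P2 (m n)` has the much larger mass
`exp (-a f₁ n)`. There are at most `exp (a f₁ n)` cells of the latter kind, and each one is
straddled by at most two cells of `P1 n`, so the points whose small cell straddles a large one have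
mass of order `exp (-(1 - a) f₁ n)`. This is summable, and by Borel–Cantelli `P1 n`-cells eventually
lie in `P2 (m n)`-cells, so that `f₂ (L n) ≥ f₂ (m n) ≥ a f₁ n`. The upper bound is deterministic: a
cell contained in another one has the smaller mass.
-/

section WeightInv

variable {f : ℕ → ℝ}

lemma le_apply_weightInv (hf : Tendsto f atTop atTop) (y : ℝ) : y ≤ f (weightInv f y) :=
  Nat.sInf_mem (s := {n | y ≤ f n}) (hf.eventually_ge_atTop y).exists

lemma apply_lt_of_lt_weightInv {y : ℝ} {k : ℕ} (hk : k < weightInv f y) : f k < y :=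
  not_le.1 (Nat.notMem_of_lt_sInf hk)

lemma tendsto_weightInv (hf : Tendsto f atTop atTop) : Tendsto (weightInv f) atTop atTop := by
  refine tendsto_atTop.2 fun b => ?_
  filter_upwards [(finite_lt_nat b).eventually_all.2 fun k _ => eventually_gt_atTop (f k)] with y hy
  exact not_lt.1 fun hlt => (le_apply_weightInv hf y).not_gt (hy _ hlt)

lemma isEquivalent_apply_weightInv (hf : Tendsto f atTop atTop)
    (hstep : (fun n => f (n + 1) - f n) =o[atTop] f) :
    (fun y => f (weightInv f y)) ~[atTop] id := by
  have hpred : Tendsto (fun y => weightInv f y - 1) atTop atTop :=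
    (tendsto_sub_atTop_nat 1).comp (tendsto_weightInv hf)
  have hpos : ∀ᶠ y in atTop, 0 < weightInv f y :=
    (tendsto_weightInv hf).eventually_gt_atTop 0
  have hdiff : (fun y => f (weightInv f y) - y) =O[atTop]
      ((fun n => f (n + 1) - f n) ∘ fun y => weightInv f y - 1) := by
    refine IsBigO.of_bound' ?_
    filter_upwards [hpos] with y hy
    have hlt : f (weightInv f y - 1) < y := apply_lt_of_lt_weightInv (Nat.sub_one_lt_of_lt hy)
    have hle := le_apply_weightInv hf y
    rw [Function.comp_apply, Nat.sub_add_cancel hy, Real.norm_of_nonneg (by linarith),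
      Real.norm_of_nonneg (by linarith)]
    linarith
  have hbound : (f ∘ fun y => weightInv f y - 1) =O[atTop] (id : ℝ → ℝ) := by
    refine IsBigO.of_bound' ?_
    filter_upwards [hpos, hpred.eventually (hf.eventually_ge_atTop 0)] with y hy hnonneg
    have hlt : f (weightInv f y - 1) < y := apply_lt_of_lt_weightInv (Nat.sub_one_lt_of_lt hy)
    simp only [Function.comp_apply, id_eq, Real.norm_of_nonneg hnonneg,
      Real.norm_of_nonneg (hnonneg.trans hlt.le)]
    exact hlt.le
  exact hdiff.trans_isLittleO ((hstep.comp_tendsto hpred).trans_isBigO hbound)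

lemma tendsto_apply_weightInv_mul_div {g : ℕ → ℝ} {a : ℝ} (hf : Tendsto f atTop atTop)
    (hstep : (fun n => f (n + 1) - f n) =o[atTop] f)
    (hg : Tendsto g atTop atTop) (ha : 0 < a) :
    Tendsto (fun n => f (weightInv f (a * g n)) / g n) atTop (nhds a) := by
  have hlim : Tendsto (fun y => f (weightInv f y) / y) atTop (nhds 1) :=
    (isEquivalent_iff_tendsto_one (eventually_ne_atTop 0)).1
      (isEquivalent_apply_weightInv hf hstep)
  have hscaled := (hlim.comp (hg.const_mul_atTop ha)).const_mul a
  rw [mul_one] at hscaled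
  refine hscaled.congr fun n => ?_
  rw [Function.comp_apply, ← mul_div_assoc, mul_div_mul_left _ _ ha.ne']

end WeightInv

lemma tendsto_atTop_of_summable_exp_neg_mul {f : ℕ → ℝ} {δ : ℝ} (hδ : 0 < δ)
    (hf : Summable fun n => Real.exp (-δ * f n)) : Tendsto f atTop atTop :=
  (tendsto_const_mul_atBot_of_neg (neg_neg_of_pos hδ)).1
    (Real.tendsto_exp_comp_nhds_zero.1 hf.tendsto_atTop_zero)

lemma eventually_apply_div_lt {f g u v : ℕ → ℝ} {L : ℕ → ℕ} {b : ℝ}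
    (hf : Tendsto f atTop atTop) (hg : Tendsto g atTop atTop) (hL : Tendsto L atTop atTop)
    (hu : Tendsto (fun n => u n / f n) atTop (nhds 1))
    (hv : Tendsto (fun n => v n / g n) atTop (nhds 1))
    (hle : ∀ᶠ n in atTop, v (L n) ≤ u n) (hb : 1 < b) :
    ∀ᶠ n in atTop, g (L n) / f n < b := by
  have hquot := hu.div (hv.comp hL) one_ne_zero
  rw [div_one] at hquot
  filter_upwards [hle, hquot.eventually_lt_const hb, hf.eventually_gt_atTop 0,
    hL.eventually (hg.eventually_gt_atTop 0),
    hL.eventually (hv.eventually_const_lt one_pos)] with n hn hlt hfn hgn hvn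
  calc g (L n) / f n = v (L n) / f n / (v (L n) / g (L n)) := by
        rw [eq_div_iff hvn.ne', mul_comm, div_mul_div_cancel₀ hgn.ne']
    _ ≤ u n / f n / (v (L n) / g (L n)) := by gcongr
    _ < b := hlt

section IntervalPacking

/-- A family of pairwise disjoint intervals, encoded as order-connected sets: they may be
degenerate or unbounded, contain their ends or not, and, unlike those of a topological partition,
leave part of the space uncovered. -/
structure IsIntervalPacking {α : Type*} [Preorder α] (P : Set (Set α)) : Prop where
  pairwiseDisjoint : P.PairwiseDisjoint id
  ordConnected : ∀ I ∈ P, I.OrdConnected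

/-- The members of `P` that straddle `J`: they meet `J` without being contained in it. For
intervals, these are the ones that reach across an end of `J`. -/
def straddling {α : Type*} (P : Set (Set α)) (J : Set α) : Set (Set α) :=
  {I ∈ P | (I ∩ J).Nonempty ∧ ¬ I ⊆ J}

lemma IsTopPartition.isIntervalPacking {P : Set (Set ℝ)} (hP : IsTopPartition P) :
    IsIntervalPacking P where
  pairwiseDisjoint := hP.2.2.1
  ordConnected I hI := by
    obtain ⟨a, b, -, -, -, rfl⟩ := hP.2.1 I hI
    exact ordConnected_Ioo

variable {α : Type*} [LinearOrder α] {P : Set (Set α)}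

lemma IsIntervalPacking.subsingleton_inter_lowerBounds (hP : IsIntervalPacking P) (J : Set α) :
    {I ∈ P | (I ∩ J).Nonempty ∧ (I ∩ lowerBounds J).Nonempty}.Subsingleton := by
  rintro I ⟨hI, ⟨x, hxI, hxJ⟩, z, hzI, hz⟩ I' ⟨hI', ⟨x', hxI', hxJ'⟩, z', hzI', hz'⟩
  rcases le_total z z' with hzz | hzz
  · exact hP.pairwiseDisjoint.elim_set hI hI' z'
      ((hP.ordConnected I hI).out hzI hxI ⟨hzz, hz' hxJ⟩) hzI'
  · exact hP.pairwiseDisjoint.elim_set hI hI' z hzI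
      ((hP.ordConnected I' hI').out hzI' hxI' ⟨hzz, hz hxJ'⟩)

lemma IsIntervalPacking.subsingleton_inter_upperBounds (hP : IsIntervalPacking P) (J : Set α) :
    {I ∈ P | (I ∩ J).Nonempty ∧ (I ∩ upperBounds J).Nonempty}.Subsingleton := by
  rintro I ⟨hI, ⟨x, hxI, hxJ⟩, z, hzI, hz⟩ I' ⟨hI', ⟨x', hxI', hxJ'⟩, z', hzI', hz'⟩
  rcases le_total z z' with hzz | hzz
  · exact hP.pairwiseDisjoint.elim_set hI hI' z hzI
      ((hP.ordConnected I' hI').out hxI' hzI' ⟨hz hxJ', hzz⟩)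
  · exact hP.pairwiseDisjoint.elim_set hI hI' z'
      ((hP.ordConnected I hI).out hxI hzI ⟨hz' hxJ, hzz⟩) hzI'

lemma mem_lowerBounds_or_mem_upperBounds {J : Set α} (hJ : J.OrdConnected)
    {z : α} (hz : z ∉ J) : z ∈ lowerBounds J ∨ z ∈ upperBounds J := by
  by_contra! h
  simp only [mem_lowerBounds, mem_upperBounds, not_forall, not_le] at h
  obtain ⟨⟨y, hyJ, hy⟩, w, hwJ, hw⟩ := h
  exact hz (hJ.out hyJ hwJ ⟨hy.le, hw.le⟩)

lemma IsIntervalPacking.encard_straddling_le (hP : IsIntervalPacking P) {J : Set α}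
    (hJ : J.OrdConnected) : (straddling P J).encard ≤ 2 := by
  have hsub : straddling P J ⊆
      {I ∈ P | (I ∩ J).Nonempty ∧ (I ∩ lowerBounds J).Nonempty} ∪
        {I ∈ P | (I ∩ J).Nonempty ∧ (I ∩ upperBounds J).Nonempty} := by
    rintro I ⟨hI, hmeet, hnot⟩
    obtain ⟨z, hzI, hzJ⟩ := not_subset.1 hnot
    exact (mem_lowerBounds_or_mem_upperBounds hJ hzJ).imp
      (fun hz => ⟨hI, hmeet, z, hzI, hz⟩) (fun hz => ⟨hI, hmeet, z, hzI, hz⟩)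
  calc (straddling P J).encard ≤ _ := (encard_le_encard hsub).trans (encard_union_le _ _)
    _ ≤ 1 + 1 := add_le_add
        (encard_le_one_iff_subsingleton.2 (hP.subsingleton_inter_lowerBounds J))
        (encard_le_one_iff_subsingleton.2 (hP.subsingleton_inter_upperBounds J))
    _ = 2 := one_add_one_eq_two

end IntervalPacking

section MeasureBounds

variable {α : Type*} [MeasurableSpace α] {μ : Measure α}

lemma measureReal_biUnion_le_ncard_mul {ι : Type*} {s : Set ι} (hs : s.Finite) {A : ι → Set α}
    {c : ℝ} (hc : ∀ i ∈ s, μ.real (A i) ≤ c) : μ.real (⋃ i ∈ s, A i) ≤ s.ncard * c := by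
  lift s to Finset ι using hs
  simp only [Finset.mem_coe, ncard_coe_finset] at hc ⊢
  calc μ.real (⋃ i ∈ s, A i) ≤ ∑ i ∈ s, μ.real (A i) := measureReal_biUnion_finset_le s A
    _ ≤ s.card * c := by simpa only [nsmul_eq_mul] using s.sum_le_card_nsmul _ c hc

variable [IsFiniteMeasure μ] {Q : Set (Set α)} {t : ℝ}

lemma finite_setOf_le_measureReal (hdisj : Q.PairwiseDisjoint id)
    (hmeas : ∀ J ∈ Q, MeasurableSet J) (ht : 0 < t) : {J ∈ Q | t ≤ μ.real J}.Finite := by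
  have hfin := Measure.finite_const_le_meas_of_disjoint_iUnion μ (ENNReal.ofReal_pos.2 ht)
    (As := ((↑) : Q → Set α)) (fun J => hmeas J J.2)
    (fun J J' hne => hdisj J.2 J'.2 (Subtype.coe_ne_coe.2 hne)) (measure_ne_top _ _)
  refine (hfin.image Subtype.val).subset fun J ⟨hJ, hle⟩ => ⟨⟨J, hJ⟩, ?_, rfl⟩
  exact (ENNReal.ofReal_le_iff_le_toReal (measure_ne_top _ _)).2 hle

lemma ncard_setOf_le_measureReal_le (hdisj : Q.PairwiseDisjoint id)
    (hmeas : ∀ J ∈ Q, MeasurableSet J) (ht : 0 < t) :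
    ({J ∈ Q | t ≤ μ.real J}.ncard : ℝ) ≤ μ.real univ / t := by
  have hfin := finite_setOf_le_measureReal (μ := μ) hdisj hmeas ht
  rw [le_div_iff₀ ht, ncard_eq_toFinset_card _ hfin, ← nsmul_eq_mul]
  have hmem {J : Set α} (hJ : J ∈ hfin.toFinset) : J ∈ Q ∧ t ≤ μ.real J := hfin.mem_toFinset.1 hJ
  calc hfin.toFinset.card • t ≤ ∑ J ∈ hfin.toFinset, μ.real J :=
        Finset.card_nsmul_le_sum _ _ _ fun J hJ => (hmem hJ).2
    _ ≤ μ.real univ := sum_measureReal_le_measureReal_univ (t := id)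
        (fun J hJ => hmeas J (hmem hJ).1) (hdisj.subset fun J hJ => (hmem hJ).1)

lemma ae_eventually_notMem_of_summable_measureReal {s : ℕ → Set α}
    (hs : Summable fun n => μ.real (s n)) : ∀ᵐ x ∂μ, ∀ᶠ n in atTop, x ∉ s n := by
  refine ae_eventually_notMem ?_
  simpa only [ofReal_measureReal (measure_ne_top μ _)] using hs.tsum_ofReal_ne_top

end MeasureBounds

section StraddlingSet

variable {α : Type*} [LinearOrder α] [TopologicalSpace α] [OrderClosedTopology α]
  [MeasurableSpace α] [OpensMeasurableSpace α] {μ : Measure α}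

/-- The union of the members of `P` of mass at most `c` that straddle a member of `Q` of mass at
least `t`: the exceptional set of the Borel–Cantelli argument, with `c` much smaller than `t`. -/
def straddlingSet (μ : Measure α) (P Q : Set (Set α)) (c t : ℝ) : Set α :=
  ⋃ J ∈ {J ∈ Q | t ≤ μ.real J}, ⋃ I ∈ {I ∈ straddling P J | μ.real I ≤ c}, I

lemma measureReal_straddlingSet_le [IsFiniteMeasure μ] {P Q : Set (Set α)}
    (hP : IsIntervalPacking P) (hQ : IsIntervalPacking Q) {c t : ℝ} (hc : 0 ≤ c) (ht : 0 < t) :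
    μ.real (straddlingSet μ P Q c t) ≤ 2 * μ.real univ * (c / t) := by
  have hmeas : ∀ J ∈ Q, MeasurableSet J := fun J hJ => (hQ.ordConnected J hJ).measurableSet
  have hone : ∀ J ∈ {J ∈ Q | t ≤ μ.real J},
      μ.real (⋃ I ∈ {I ∈ straddling P J | μ.real I ≤ c}, I) ≤ 2 * c := by
    rintro J ⟨hJ, -⟩
    have hcard : {I ∈ straddling P J | μ.real I ≤ c}.encard ≤ 2 :=
      (encard_le_encard (sep_subset _ _)).trans (hP.encard_straddling_le (hQ.ordConnected J hJ))
    obtain ⟨hfin, hncard⟩ := encard_le_coe_iff_finite_ncard_le.1 hcard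
    refine (measureReal_biUnion_le_ncard_mul hfin fun I hI => hI.2).trans ?_
    gcongr
    exact_mod_cast hncard
  calc μ.real (straddlingSet μ P Q c t)
      ≤ {J ∈ Q | t ≤ μ.real J}.ncard * (2 * c) :=
        measureReal_biUnion_le_ncard_mul
          (finite_setOf_le_measureReal hQ.pairwiseDisjoint hmeas ht) hone
    _ ≤ μ.real univ / t * (2 * c) := by
        gcongr
        exact ncard_setOf_le_measureReal_le hQ.pairwiseDisjoint hmeas ht
    _ = 2 * μ.real univ * (c / t) := by ring

lemma ae_eventually_notMem_straddlingSet [IsFiniteMeasure μ] {P Q : ℕ → Set (Set α)}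
    (hP : ∀ n, IsIntervalPacking (P n)) (hQ : ∀ n, IsIntervalPacking (Q n)) {u v : ℕ → ℝ}
    (hsum : Summable fun n => Real.exp (v n - u n)) :
    ∀ᵐ x ∂μ, ∀ᶠ n in atTop,
      x ∉ straddlingSet μ (P n) (Q n) (Real.exp (-u n)) (Real.exp (-v n)) := by
  refine ae_eventually_notMem_of_summable_measureReal <|
    Summable.of_nonneg_of_le (fun _ => measureReal_nonneg) (fun n => ?_)
      (hsum.mul_left (2 * μ.real univ))
  have hbound := measureReal_straddlingSet_le (μ := μ) (hP n) (hQ n)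
    (Real.exp_pos (-u n)).le (Real.exp_pos (-v n))
  rwa [← Real.exp_sub, neg_sub_neg] at hbound

end StraddlingSet

section Information

variable {μ : Measure ℝ} {P Q : Set (Set ℝ)} {x : ℝ}

/-- The information function `-log μ(I(x))` of a family of sets, where `I(x)` is the cell of `x`.
It takes the junk value `0` where the cell is empty or null. -/
def information (μ : Measure ℝ) (P : Set (Set ℝ)) (x : ℝ) : ℝ :=
  -Real.log (μ.real (cell P x))

lemma measureReal_cell_pos_of_information_ne_zero (h : information μ P x ≠ 0) :
    0 < μ.real (cell P x) := by
  refine measureReal_nonneg.lt_of_ne' fun h0 => h ?_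
  rw [information, h0, Real.log_zero, neg_zero]

lemma measureReal_cell_le_of_le_information {u : ℝ} (h : u ≤ information μ P x) :
    μ.real (cell P x) ≤ Real.exp (-u) :=
  (Real.le_exp_log _).trans (Real.exp_le_exp.2 (le_neg_of_le_neg h))

lemma le_measureReal_cell_of_information_le {v : ℝ} (hpos : 0 < μ.real (cell P x))
    (h : information μ P x ≤ v) : Real.exp (-v) ≤ μ.real (cell P x) :=
  (Real.le_log_iff_exp_le hpos).1 (neg_le.1 h)

lemma information_le_of_cell_subset [IsFiniteMeasure μ] (hpos : 0 < μ.real (cell P x))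
    (h : cell P x ⊆ cell Q x) : information μ Q x ≤ information μ P x :=
  neg_le_neg (Real.log_le_log hpos (measureReal_mono h))

lemma eventually_measureReal_cell_pos {P : ℕ → Set (Set ℝ)} {f : ℕ → ℝ} {a : ℝ} (ha : a ≠ 0)
    (h : Tendsto (fun n => information μ (P n) x / f n) atTop (nhds a)) :
    ∀ᶠ n in atTop, 0 < μ.real (cell (P n) x) :=
  (h.eventually_ne ha).mono fun _ hn =>
    measureReal_cell_pos_of_information_ne_zero (div_ne_zero_iff.1 hn).1

lemma IsIntervalPacking.cell_eq_of_mem (hP : IsIntervalPacking P) {I : Set ℝ} (hI : I ∈ P)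
    (hx : x ∈ I) : cell P x = I := by
  have hsingle : {J | J ∈ P ∧ x ∈ J} = {I} :=
    eq_singleton_iff_unique_mem.2
      ⟨⟨hI, hx⟩, fun J hJ => hP.pairwiseDisjoint.elim_set hJ.1 hI x hJ.2 hx⟩
  rw [cell, hsingle, sUnion_singleton]

lemma IsIntervalPacking.cell_mem (hP : IsIntervalPacking P) (h : (cell P x).Nonempty) :
    cell P x ∈ P ∧ x ∈ cell P x := by
  obtain ⟨y, I, ⟨hI, hx⟩, -⟩ := h
  rw [hP.cell_eq_of_mem hI hx]
  exact ⟨hI, hx⟩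

lemma IsIntervalPacking.cell_subset_of_notMem_straddlingSet (hP : IsIntervalPacking P)
    (hQ : IsIntervalPacking Q) {c t : ℝ} (hPpos : 0 < μ.real (cell P x))
    (hPc : μ.real (cell P x) ≤ c) (hQpos : 0 < μ.real (cell Q x)) (htQ : t ≤ μ.real (cell Q x))
    (hx : x ∉ straddlingSet μ P Q c t) : cell P x ⊆ cell Q x := by
  obtain ⟨hI, hxI⟩ := hP.cell_mem (nonempty_of_measureReal_ne_zero hPpos.ne')
  obtain ⟨hJ, hxJ⟩ := hQ.cell_mem (nonempty_of_measureReal_ne_zero hQpos.ne')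
  by_contra hnot
  exact hx (mem_biUnion ⟨hJ, htQ⟩ (mem_biUnion ⟨⟨hI, ⟨x, hxI, hxJ⟩, hnot⟩, hPc⟩ hxI))

lemma tendsto_information_weightInv_div {Q : ℕ → Set (Set ℝ)} {f g : ℕ → ℝ} {a : ℝ}
    (hg : Tendsto g atTop atTop) (hf : Tendsto f atTop atTop)
    (hstep : (fun n => f (n + 1) - f n) =o[atTop] f)
    (hQ : Tendsto (fun n => information μ (Q n) x / f n) atTop (nhds 1)) (ha : 0 < a) :
    Tendsto (fun n => information μ (Q (weightInv f (a * g n))) x / g n) atTop (nhds a) := by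
  have hindex : Tendsto (fun n => weightInv f (a * g n)) atTop atTop :=
    (tendsto_weightInv hf).comp (hg.const_mul_atTop ha)
  have hprod := (hQ.comp hindex).mul (tendsto_apply_weightInv_mul_div hf hstep hg ha)
  rw [one_mul] at hprod
  refine hprod.congr' ?_
  filter_upwards [hindex.eventually (hf.eventually_ne_atTop 0)] with n hn
  exact div_mul_div_cancel₀ hn

lemma ae_eventually_cell_subset [IsFiniteMeasure μ] {P Q : ℕ → Set (Set ℝ)}
    (hP : ∀ n, IsIntervalPacking (P n)) (hQ : ∀ n, IsIntervalPacking (Q n)) {f : ℕ → ℝ} {a b : ℝ}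
    (hb : 0 < b) (hba : b < a)
    (hsum : ∀ δ : ℝ, 0 < δ → Summable fun n => Real.exp (-δ * f n))
    (hu : ∀ᵐ x ∂μ, Tendsto (fun n => information μ (P n) x / f n) atTop (nhds a))
    (hv : ∀ᵐ x ∂μ, Tendsto (fun n => information μ (Q n) x / f n) atTop (nhds b)) :
    ∀ᵐ x ∂μ, ∀ᶠ n in atTop, cell (P n) x ⊆ cell (Q n) x := by
  obtain ⟨s, hbs, hsa⟩ := exists_between hba
  obtain ⟨r, hsr, hra⟩ := exists_between hsa
  have hf : Tendsto f atTop atTop :=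
    tendsto_atTop_of_summable_exp_neg_mul one_pos (hsum 1 one_pos)
  have hsum_sr : Summable fun n => Real.exp (s * f n - r * f n) := by
    simpa only [neg_sub, sub_mul] using hsum (r - s) (sub_pos.2 hsr)
  filter_upwards [ae_eventually_notMem_straddlingSet (μ := μ) hP hQ hsum_sr, hu, hv]
    with x hx hux hvx
  filter_upwards [hx, hf.eventually_gt_atTop 0, hux.eventually_const_lt hra,
    hvx.eventually_lt_const hbs, eventually_measureReal_cell_pos (hb.trans hba).ne' hux,
    eventually_measureReal_cell_pos hb.ne' hvx] with n hn hfn hun hvn hPpos hQpos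
  exact (hP n).cell_subset_of_notMem_straddlingSet (hQ n) hPpos
    (measureReal_cell_le_of_le_information ((lt_div_iff₀ hfn).1 hun).le) hQpos
    (le_measureReal_cell_of_information_le hQpos ((div_lt_iff₀ hfn).1 hvn).le) hn

end Information

section LochsIndex

variable {μ : Measure ℝ} [IsFiniteMeasure μ] {P Q : ℕ → Set (Set ℝ)} {x : ℝ} {n m : ℕ}

lemma bddAbove_setOf_cell_subset (hpos : 0 < μ.real (cell (P n) x))
    (hQ : Tendsto (fun ℓ => information μ (Q ℓ) x) atTop atTop) :
    BddAbove {ℓ | cell (P n) x ⊆ cell (Q ℓ) x} := by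
  obtain ⟨N, hN⟩ := eventually_atTop.1 (hQ.eventually_gt_atTop (information μ (P n) x))
  exact ⟨N, fun ℓ hℓ => not_lt.1 fun hlt =>
    (hN ℓ hlt.le).not_ge (information_le_of_cell_subset hpos hℓ)⟩

lemma le_lochsIndex (hpos : 0 < μ.real (cell (P n) x))
    (hQ : Tendsto (fun ℓ => information μ (Q ℓ) x) atTop atTop)
    (h : cell (P n) x ⊆ cell (Q m) x) : m ≤ lochsIndex P Q n x :=
  le_csSup (bddAbove_setOf_cell_subset hpos hQ) h

lemma information_lochsIndex_le (hpos : 0 < μ.real (cell (P n) x))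
    (hQ : Tendsto (fun ℓ => information μ (Q ℓ) x) atTop atTop)
    (h : cell (P n) x ⊆ cell (Q m) x) :
    information μ (Q (lochsIndex P Q n x)) x ≤ information μ (P n) x :=
  information_le_of_cell_subset hpos
    (Nat.sSup_mem (s := {ℓ | cell (P n) x ⊆ cell (Q ℓ) x}) ⟨m, h⟩
      (bddAbove_setOf_cell_subset hpos hQ))

lemma tendsto_apply_lochsIndex_div {f₁ f₂ : ℕ → ℝ} (hf₁ : Tendsto f₁ atTop atTop)
    (hf₂ : Tendsto f₂ atTop atTop) (hmono : Monotone f₂)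
    (hP : Tendsto (fun n => information μ (P n) x / f₁ n) atTop (nhds 1))
    (hQ : Tendsto (fun n => information μ (Q n) x / f₂ n) atTop (nhds 1))
    {a : ℕ → ℝ} (ha : ∀ k, 0 < a k) (ha_lim : Tendsto a atTop (nhds 1))
    (hsub : ∀ k, ∀ᶠ n in atTop, cell (P n) x ⊆ cell (Q (weightInv f₂ (a k * f₁ n))) x) :
    Tendsto (fun n => f₂ (lochsIndex P Q n x) / f₁ n) atTop (nhds 1) := by
  have hQ_atTop : Tendsto (fun n => information μ (Q n) x) atTop atTop :=
    (hQ.pos_mul_atTop one_pos hf₂).congr' <|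
      (hf₂.eventually_ne_atTop 0).mono fun _ hne => div_mul_cancel₀ _ hne
  have hPpos := eventually_measureReal_cell_pos one_ne_zero hP
  have hindex (k : ℕ) : ∀ᶠ n in atTop, weightInv f₂ (a k * f₁ n) ≤ lochsIndex P Q n x := by
    filter_upwards [hPpos, hsub k] with n hpos hn using le_lochsIndex hpos hQ_atTop hn
  have hL : Tendsto (fun n => lochsIndex P Q n x) atTop atTop :=
    tendsto_atTop_mono' atTop (hindex 0)
      ((tendsto_weightInv hf₂).comp (hf₁.const_mul_atTop (ha 0)))
  have hinfo : ∀ᶠ n in atTop,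
      information μ (Q (lochsIndex P Q n x)) x ≤ information μ (P n) x := by
    filter_upwards [hPpos, hsub 0] with n hpos hn using information_lochsIndex_le hpos hQ_atTop hn
  refine tendsto_order.2 ⟨fun b hb => ?_, fun b hb =>
    eventually_apply_div_lt hf₁ hf₂ hL hP hQ hinfo hb⟩
  obtain ⟨k, hk⟩ := (ha_lim.eventually_const_lt hb).exists
  filter_upwards [hindex k, hf₁.eventually_gt_atTop 0] with n hn hf₁n
  rw [lt_div_iff₀ hf₁n]
  calc b * f₁ n < a k * f₁ n := by gcongr
    _ ≤ f₂ (weightInv f₂ (a k * f₁ n)) := le_apply_weightInv hf₂ _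
    _ ≤ f₂ (lochsIndex P Q n x) := hmono hn

end LochsIndex

theorem lochs_type_ae_general (μ : Measure ℝ) [IsFiniteMeasure μ] {P Q : ℕ → Set (Set ℝ)}
    (hP : ∀ n, IsIntervalPacking (P n)) (hQ : ∀ n, IsIntervalPacking (Q n)) {f₁ f₂ : ℕ → ℝ}
    (hinfoP : ∀ᵐ x ∂μ, Tendsto (fun n => information μ (P n) x / f₁ n) atTop (nhds 1))
    (hinfoQ : ∀ᵐ x ∂μ, Tendsto (fun n => information μ (Q n) x / f₂ n) atTop (nhds 1))
    (hf₂ : Tendsto f₂ atTop atTop)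
    (hsum : ∀ δ : ℝ, 0 < δ → Summable fun n => Real.exp (-δ * f₁ n))
    (hmono : Monotone f₂) (hstep : (fun n => f₂ (n + 1) - f₂ n) =o[atTop] f₂) :
    ∀ᵐ x ∂μ, Tendsto (fun n => f₂ (lochsIndex P Q n x) / f₁ n) atTop (nhds 1) := by
  have hf₁ : Tendsto f₁ atTop atTop :=
    tendsto_atTop_of_summable_exp_neg_mul one_pos (hsum 1 one_pos)
  obtain ⟨a, -, ha_mem, ha_lim⟩ := exists_seq_strictMono_tendsto' (zero_lt_one (α := ℝ))
  have hsub : ∀ᵐ x ∂μ, ∀ k, ∀ᶠ n in atTop,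
      cell (P n) x ⊆ cell (Q (weightInv f₂ (a k * f₁ n))) x := by
    refine ae_all_iff.2 fun k => ae_eventually_cell_subset hP (fun n => hQ _)
      (ha_mem k).1 (ha_mem k).2 hsum hinfoP ?_
    filter_upwards [hinfoQ] with x hx
    exact tendsto_information_weightInv_div hf₁ hf₂ hstep hx (ha_mem k).1
  filter_upwards [hinfoP, hinfoQ, hsub] with x hPx hQx hx
  exact tendsto_apply_lochsIndex_div hf₁ hf₂ hmono hPx hQx (fun k => (ha_mem k).1) ha_lim hx

/-- Theorem (Lochs-type theorem a.e.). -/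
theorem lochs_type_ae (lam : Measure ℝ) [IsProbabilityMeasure lam]
    (hlam : lam (Set.Icc (0 : ℝ) 1)ᶜ = 0)
    (P1 P2 : ℕ → Set (Set ℝ))
    (hP1 : ∀ n, IsTopPartition (P1 n)) (hP2 : ∀ n, IsTopPartition (P2 n))
    (f₁ f₂ : ℕ → ℝ)
    (hb1 : LogBalancedAE lam P1 f₁) (hb2 : LogBalancedAE lam P2 f₂)
    (hsum : ∀ δ : ℝ, 0 < δ → Summable fun n => Real.exp (-δ * f₁ n))
    (hmono : Monotone f₂)
    (hlittle : (fun n => f₂ (n + 1) - f₂ n) =o[atTop] f₂) :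
    ∀ᵐ x ∂lam,
      Tendsto (fun n => f₂ (lochsIndex P1 P2 n x) / f₁ n) atTop (nhds 1) := by
  exact lochs_type_ae_general lam (fun n => (hP1 n).isIntervalPacking)
    (fun n => (hP2 n).isIntervalPacking) hb1.2.2 hb2.2.2 hb2.2.1 hsum hmono hlittle
end
end

section
/- Let λ and μ be Borel probability measures on [0,1] that are equivalent in the sense that μ has a bounded density with respect to λ and λ has a bounded density with respect to μ. If a sequence of partitions 𝒫 is log-balanced a.e. (resp. in measure) with respect to λ with weight function f, then 𝒫 is also log-balanced a.e. (resp. in measure) with respect to μ with the same weight function f. -/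
open MeasureTheory Filter Set Asymptotics

noncomputable section

/-!
If `mu ≤ C • lam` and `lam ≤ D • mu`, then `log lam(A)` and `log mu(A)` differ by at most a
constant independent of `A`. Dividing by `f n → ∞`, the normalized informations of `lam` and `mu`
become uniformly close, so they have the same limits; and `mu ≤ C • lam` turns convergence
`lam`-a.e. or in `lam`-measure into convergence `mu`-a.e. or in `mu`-measure.
-/

theorem log_sub_log_le_log_of_le_mul {a b C : ℝ} (ha : 0 < a) (hb : 0 < b) (hba : b ≤ C * a) :
    Real.log b - Real.log a ≤ Real.log C := by
  rw [← Real.log_div hb.ne' ha.ne']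
  exact Real.log_le_log (div_pos hb ha) ((div_le_iff₀ ha).2 hba)

section MeasureComparison

variable {α ι : Type*} [MeasurableSpace α] {μ ν : Measure α} {C D : ENNReal}

theorem withDensity_le_smul_of_ae_le {g : α → ENNReal} (hg : ∀ᵐ x ∂μ, g x ≤ C) :
    μ.withDensity g ≤ C • μ :=
  (withDensity_mono hg).trans_eq (withDensity_const C)

theorem measureReal_le_toReal_mul_of_le_smul [IsFiniteMeasure μ] (hC : C ≠ ⊤) (hν : ν ≤ C • μ)
    (A : Set α) : ν.real A ≤ C.toReal * μ.real A := by
  rw [← measureReal_ennreal_smul_apply]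
  exact ENNReal.toReal_mono (ENNReal.mul_ne_top hC (measure_ne_top μ A)) (hν A)

theorem abs_log_measureReal_sub_le [IsFiniteMeasure μ] (hC : C ≠ ⊤) (hD : D ≠ ⊤)
    (hν : ν ≤ C • μ) (hμ : μ ≤ D • ν) (A : Set α) :
    |Real.log (μ.real A) - Real.log (ν.real A)| ≤
      max |Real.log C.toReal| |Real.log D.toReal| := by
  have : IsFiniteMeasure (C • μ) := μ.smul_finite hC
  have : IsFiniteMeasure ν := isFiniteMeasure_of_le (C • μ) hν
  have hνA : ν.real A ≤ C.toReal * μ.real A := measureReal_le_toReal_mul_of_le_smul hC hν A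
  have hμA : μ.real A ≤ D.toReal * ν.real A := measureReal_le_toReal_mul_of_le_smul hD hμ A
  rcases (measureReal_nonneg (μ := μ) (s := A)).eq_or_lt with hμ0 | hμpos
  · have hν0 : ν.real A = 0 := le_antisymm (by simpa [← hμ0] using hνA) measureReal_nonneg
    simp [← hμ0, hν0]
  · have hνpos : 0 < ν.real A :=
      pos_of_mul_pos_right (hμpos.trans_le hμA) ENNReal.toReal_nonneg
    exact abs_sub_le_iff.2
      ⟨le_max_of_le_right
          ((log_sub_log_le_log_of_le_mul hνpos hμpos hμA).trans (le_abs_self _)),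
        le_max_of_le_left
          ((log_sub_log_le_log_of_le_mul hμpos hνpos hνA).trans (le_abs_self _))⟩

section ConvergenceInMeasure

variable {E : Type*} {l : Filter ι} {u v : ι → α → E} {w : α → E}

theorem tendstoInMeasure_of_le_smul [EDist E] (hC : C ≠ ⊤) (hν : ν ≤ C • μ)
    (hu : TendstoInMeasure μ u l w) : TendstoInMeasure ν u l w := by
  intro ε hε
  have hlim : Tendsto (fun i => C * μ {x | ε ≤ edist (u i x) (w x)}) l (nhds 0) := by
    simpa only [mul_zero] using ENNReal.Tendsto.const_mul (hu ε hε) (Or.inr hC)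
  exact tendsto_of_tendsto_of_tendsto_of_le_of_le tendsto_const_nhds hlim
    (fun _ => zero_le) fun i => hν _

theorem tendstoInMeasure_of_tendstoUniformly_dist [PseudoMetricSpace E]
    (huv : TendstoUniformly (fun i x => dist (u i x) (v i x)) 0 l)
    (hu : TendstoInMeasure μ u l w) : TendstoInMeasure μ v l w := by
  rw [tendstoInMeasure_iff_dist] at hu ⊢
  intro ε hε
  refine tendsto_of_tendsto_of_tendsto_of_le_of_le' tendsto_const_nhds (hu (ε / 2) (half_pos hε))
    (Eventually.of_forall fun _ => zero_le) ?_
  filter_upwards [Metric.tendstoUniformly_iff.1 huv (ε / 2) (half_pos hε)] with i hi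
  refine measure_mono fun x (hx : ε ≤ dist (v i x) (w x)) => ?_
  have hclose : dist (u i x) (v i x) < ε / 2 := by simpa using hi x
  have htriangle := dist_triangle_left (v i x) (w x) (u i x)
  exact (by linarith : ε / 2 ≤ dist (u i x) (w x))

end ConvergenceInMeasure

/-- The normalized information `-log μ(S_n(x)) / f(n)` carried by a set `S n x` attached to each
point `x`. Log-balancedness is its convergence to `1` when `S n x = cell (Ps n) x`. If `S n x` is
null, the value is `0` rather than `∞`, since `Real.log 0 = 0`. -/
def normalizedInformation (μ : Measure α) (S : ι → α → Set α) (f : ι → ℝ) (n : ι) (x : α) : ℝ :=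
  -Real.log (μ.real (S n x)) / f n

theorem dist_normalizedInformation_le [IsFiniteMeasure μ] (hC : C ≠ ⊤) (hD : D ≠ ⊤)
    (hν : ν ≤ C • μ) (hμ : μ ≤ D • ν) (S : ι → α → Set α) (f : ι → ℝ) (n : ι) (x : α) :
    dist (normalizedInformation μ S f n x) (normalizedInformation ν S f n x) ≤
      max |Real.log C.toReal| |Real.log D.toReal| / |f n| := by
  rw [normalizedInformation, normalizedInformation, Real.dist_eq, ← sub_div, abs_div,
    neg_sub_neg, abs_sub_comm]
  gcongr
  exact abs_log_measureReal_sub_le hC hD hν hμ (S n x)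

theorem tendstoUniformly_dist_normalizedInformation [IsFiniteMeasure μ] (hC : C ≠ ⊤)
    (hD : D ≠ ⊤) (hν : ν ≤ C • μ) (hμ : μ ≤ D • ν) (S : ι → α → Set α) {f : ι → ℝ}
    {l : Filter ι} (hf : Tendsto f l atTop) :
    TendstoUniformly
      (fun n x => dist (normalizedInformation μ S f n x) (normalizedInformation ν S f n x))
      0 l := by
  have hbound : Tendsto (fun n => max |Real.log C.toReal| |Real.log D.toReal| / |f n|) l
      (nhds 0) :=
    (tendsto_abs_atTop_atTop.comp hf).const_div_atTop _
  refine Metric.tendstoUniformly_iff.2 fun ε hε => ?_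
  filter_upwards [hbound.eventually_lt_const hε] with n hn x
  simpa using (dist_normalizedInformation_le hC hD hν hμ S f n x).trans_lt hn

end MeasureComparison

section LogBalanced

variable {lam mu : Measure ℝ} [IsFiniteMeasure lam] {C D : ENNReal} {Ps : ℕ → Set (Set ℝ)}
  {f : ℕ → ℝ}

theorem LogBalancedAE.of_le_smul (hC : C ≠ ⊤) (hD : D ≠ ⊤) (hmu : mu ≤ C • lam)
    (hlam : lam ≤ D • mu) (hbal : LogBalancedAE lam Ps f) : LogBalancedAE mu Ps f := by
  obtain ⟨hE, hf, hlim⟩ := hbal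
  have hac : mu ≪ lam := Measure.absolutelyContinuous_of_le_smul hmu
  refine ⟨hac hE, hf, ?_⟩
  filter_upwards [hac.ae_le hlim] with x hx
  exact (tendsto_iff_of_dist ((tendstoUniformly_dist_normalizedInformation hC hD hmu hlam
    (fun n => cell (Ps n)) hf).tendsto_at x)).1 hx

theorem LogBalancedInMeasure.of_le_smul (hC : C ≠ ⊤) (hD : D ≠ ⊤) (hmu : mu ≤ C • lam)
    (hlam : lam ≤ D • mu) (hbal : LogBalancedInMeasure lam Ps f) :
    LogBalancedInMeasure mu Ps f := by
  obtain ⟨hE, hf, hlim⟩ := hbal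
  have hac : mu ≪ lam := Measure.absolutelyContinuous_of_le_smul hmu
  refine ⟨hac hE, hf, ?_⟩
  exact tendstoInMeasure_of_tendstoUniformly_dist
    (tendstoUniformly_dist_normalizedInformation hC hD hmu hlam (fun n => cell (Ps n)) hf)
    (tendstoInMeasure_of_le_smul hC hmu hlim)

theorem logBalanced_of_equivalent_general (hC : C ≠ ⊤) (hD : D ≠ ⊤) (hmu : mu ≤ C • lam)
    (hlam : lam ≤ D • mu) (Ps : ℕ → Set (Set ℝ)) (f : ℕ → ℝ) :
    (LogBalancedAE lam Ps f → LogBalancedAE mu Ps f) ∧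
    (LogBalancedInMeasure lam Ps f → LogBalancedInMeasure mu Ps f) :=
  ⟨.of_le_smul hC hD hmu hlam, .of_le_smul hC hD hmu hlam⟩

end LogBalanced

/-- Proposition: log-balancedness is preserved by equivalent measures
(mutually absolutely continuous with bounded densities), with the same weight function. -/
theorem logBalanced_of_equivalent (lam mu : Measure ℝ)
    [IsProbabilityMeasure lam] [IsProbabilityMeasure mu]
    (hlam : lam (Set.Icc (0 : ℝ) 1)ᶜ = 0) (hmu : mu (Set.Icc (0 : ℝ) 1)ᶜ = 0)
    (g h : ℝ → ENNReal) (hg : Measurable g) (hh : Measurable h)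
    (hgbdd : ∃ C : ENNReal, C ≠ ⊤ ∧ ∀ x, g x ≤ C)
    (hhbdd : ∃ C : ENNReal, C ≠ ⊤ ∧ ∀ x, h x ≤ C)
    (hmug : mu = lam.withDensity g) (hlamh : lam = mu.withDensity h)
    (Ps : ℕ → Set (Set ℝ)) (hPs : ∀ n, IsTopPartition (Ps n)) (f : ℕ → ℝ) :
    (LogBalancedAE lam Ps f → LogBalancedAE mu Ps f) ∧
    (LogBalancedInMeasure lam Ps f → LogBalancedInMeasure mu Ps f) := by
  obtain ⟨C, hC, hgC⟩ := hgbdd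
  obtain ⟨D, hD, hhD⟩ := hhbdd
  exact logBalanced_of_equivalent_general hC hD
    (hmug.trans_le (withDensity_le_smul_of_ae_le (ae_of_all _ hgC)))
    (hlamh.trans_le (withDensity_le_smul_of_ae_le (ae_of_all _ hhD))) Ps f
end
end

section
/- Let λ be a Borel probability measure on [0,1] and let 𝒫 = {P_n}_{n∈ℕ} be a sequence of partitions with λ(E^𝒫) = 0. If the number #(P_n) of intervals at depth n satisfies log #(P_n) = o(n) as n → ∞, then −log λ(I_n^𝒫(x))/n → 0 as n → ∞ for λ-almost every x (i.e., 𝒫 has zero entropy a.e. with respect to λ). -/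
open MeasureTheory Filter Set Asymptotics

noncomputable section

/-!
The cells of measure at most `exp (-ε n)` at depth `n` cover a set of measure at most
`#P_n * exp (-ε n)`, and this is summable because `#P_n` is eventually at most `exp (ε n / 2)`.
By the Borel–Cantelli lemma almost every point eventually avoids these small cells, so
`-log λ(I_n(x)) ≤ ε n` for all large `n`.
-/

section LogAsymptotics

lemma summable_mul_exp_neg_of_log_isLittleO {a : ℕ → ℝ}
    (ha : (fun n => Real.log (a n)) =o[atTop] (fun n => (n : ℝ))) {ε : ℝ} (hε : 0 < ε) :
    Summable (fun n : ℕ => a n * Real.exp (-ε * n)) := by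
  have hgeom : Summable (fun n : ℕ => Real.exp (n * (-(ε / 2)))) :=
    Real.summable_exp_nat_mul_iff.2 (by linarith)
  refine hgeom.of_norm_bounded_eventually_nat ?_
  filter_upwards [ha.def (half_pos hε)] with n hn
  have hlog : Real.log |a n| ≤ ε / 2 * n := by
    simpa using (le_abs_self _).trans hn
  calc ‖a n * Real.exp (-ε * n)‖ = |a n| * Real.exp (-ε * n) := by
        rw [norm_mul, Real.norm_eq_abs, Real.norm_of_nonneg (Real.exp_nonneg _)]
    _ ≤ Real.exp (ε / 2 * n) * Real.exp (-ε * n) := by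
        gcongr
        exact (Real.le_exp_log _).trans (Real.exp_le_exp.2 hlog)
    _ = Real.exp (n * (-(ε / 2))) := by
        rw [← Real.exp_add]
        ring_nf

lemma isLittleO_log_of_exp_neg_le {ι : Type*} {l : Filter ι} {m g : ι → ℝ} {C : ℝ}
    (hg : Tendsto g l atTop) (hle : ∀ᶠ i in l, m i ≤ C)
    (hge : ∀ ε > 0, ∀ᶠ i in l, Real.exp (-ε * g i) ≤ m i) :
    (fun i => Real.log (m i)) =o[l] g := by
  refine isLittleO_iff.2 fun ε hε => ?_
  filter_upwards [hle, hge ε hε, hg.eventually_ge_atTop 0,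
    (hg.const_mul_atTop hε).eventually_ge_atTop (Real.log C)] with i hC hexp hg0 hlogC
  have hpos : 0 < m i := (Real.exp_pos _).trans_le hexp
  have hlower : -ε * g i ≤ Real.log (m i) := (Real.le_log_iff_exp_le hpos).2 hexp
  have hupper : Real.log (m i) ≤ ε * g i := (Real.log_le_log hpos hC).trans hlogC
  rw [Real.norm_eq_abs, Real.norm_of_nonneg hg0]
  exact abs_le.2 ⟨by linarith, hupper⟩

end LogAsymptotics

section BorelCantelli

variable {α : Type*} [MeasurableSpace α] {μ : Measure α}

lemma measure_sUnion_sep_measure_le {F : Set (Set α)} (hF : F.Finite) (c : ENNReal) :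
    μ (⋃₀ {s ∈ F | μ s ≤ c}) ≤ F.ncard * c := by
  have hfin : {s ∈ F | μ s ≤ c}.Finite := hF.sep _
  calc μ (⋃₀ {s ∈ F | μ s ≤ c}) = μ (⋃ s ∈ hfin.toFinset, s) := by
        simp only [sUnion_eq_biUnion, Finite.mem_toFinset]
    _ ≤ ∑ s ∈ hfin.toFinset, μ s := measure_biUnion_finset_le _ _
    _ ≤ hfin.toFinset.card • c :=
        Finset.sum_le_card_nsmul _ _ _ fun s hs => (hfin.mem_toFinset.1 hs).2
    _ ≤ F.ncard * c := by
        rw [nsmul_eq_mul, ← ncard_eq_toFinset_card _ hfin]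
        gcongr
        exact sep_subset _ _

lemma ae_eventually_lt_measure_of_tsum_ne_top {ι : Type*} [Countable ι]
    {P : ι → Set (Set α)} {c : ι → ENNReal}
    (hfin : ∀ i, (P i).Finite) (hc : ∑' i, (P i).ncard * c i ≠ ⊤) :
    ∀ᵐ x ∂μ, ∀ᶠ i in cofinite, ∀ s ∈ P i, x ∈ s → c i < μ s := by
  have hsum : ∑' i, μ (⋃₀ {s ∈ P i | μ s ≤ c i}) ≠ ⊤ :=
    ne_top_of_le_ne_top hc (ENNReal.tsum_le_tsum fun i => measure_sUnion_sep_measure_le (hfin i) _)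
  filter_upwards [ae_finite_setOfPred_mem hsum] with x hx
  filter_upwards [hx.eventually_cofinite_notMem] with i hi s hs hxs
  by_contra! hsmall
  exact hi ⟨s, ⟨hs, hsmall⟩, hxs⟩

variable {P : ℕ → Set (Set α)}

lemma ae_eventually_exp_neg_lt_measure (hfin : ∀ n, (P n).Finite)
    (hcard : (fun n => Real.log ((P n).ncard)) =o[atTop] (fun n => (n : ℝ)))
    {ε : ℝ} (hε : 0 < ε) :
    ∀ᵐ x ∂μ, ∀ᶠ n : ℕ in atTop, ∀ s ∈ P n, x ∈ s →
      ENNReal.ofReal (Real.exp (-ε * n)) < μ s := by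
  rw [← Nat.cofinite_eq_atTop]
  refine ae_eventually_lt_measure_of_tsum_ne_top hfin ?_
  simpa only [ENNReal.ofReal_mul (Nat.cast_nonneg _), ENNReal.ofReal_natCast] using
    (summable_mul_exp_neg_of_log_isLittleO hcard hε).tsum_ofReal_ne_top

lemma ae_forall_pos_eventually_exp_neg_lt_measure (hfin : ∀ n, (P n).Finite)
    (hcard : (fun n => Real.log ((P n).ncard)) =o[atTop] (fun n => (n : ℝ))) :
    ∀ᵐ x ∂μ, ∀ ε > 0, ∀ᶠ n : ℕ in atTop, ∀ s ∈ P n, x ∈ s →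
      ENNReal.ofReal (Real.exp (-ε * n)) < μ s := by
  have hrecip : ∀ᵐ x ∂μ, ∀ k : ℕ, ∀ᶠ n : ℕ in atTop, ∀ s ∈ P n, x ∈ s →
      ENNReal.ofReal (Real.exp (-(1 / ((k : ℝ) + 1)) * n)) < μ s :=
    ae_all_iff.2 fun k => ae_eventually_exp_neg_lt_measure hfin hcard Nat.one_div_pos_of_nat
  filter_upwards [hrecip] with x hx ε hε
  obtain ⟨k, hk⟩ := exists_nat_one_div_lt hε
  filter_upwards [hx k] with n hn s hs hxs
  refine lt_of_le_of_lt ?_ (hn s hs hxs)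
  gcongr

theorem zero_entropy_of_subexponential_general [IsFiniteMeasure μ]
    (hcover : ∀ n, ∀ᵐ x ∂μ, x ∈ ⋃₀ P n) (hfin : ∀ n, (P n).Finite)
    (hcard : (fun n => Real.log ((P n).ncard)) =o[atTop] (fun n => (n : ℝ))) :
    ∀ᵐ x ∂μ,
      Tendsto (fun n => -Real.log (μ.real (⋃₀ {s | s ∈ P n ∧ x ∈ s})) / n) atTop (nhds 0) := by
  filter_upwards [ae_all_iff.2 hcover, ae_forall_pos_eventually_exp_neg_lt_measure hfin hcard]
    with x hx hlarge
  refine (IsLittleO.neg_left ?_).tendsto_div_nhds_zero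
  refine isLittleO_log_of_exp_neg_le tendsto_natCast_atTop_atTop
    (.of_forall fun n => measureReal_mono (subset_univ _)) fun ε hε => ?_
  filter_upwards [hlarge ε hε] with n hn
  obtain ⟨s, hs, hxs⟩ := hx n
  calc Real.exp (-ε * n) ≤ μ.real s :=
        (ENNReal.ofReal_le_iff_le_toReal (measure_ne_top _ _)).1 (hn s hs hxs).le
    _ ≤ μ.real (⋃₀ {s | s ∈ P n ∧ x ∈ s}) := measureReal_mono (subset_sUnion_of_mem ⟨hs, hxs⟩)

end BorelCantelli

lemma ae_mem_sUnion_of_measure_endpointSet_eq_zero {μ : Measure ℝ} {P : ℕ → Set (Set ℝ)}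
    (hμ : μ (Icc (0 : ℝ) 1)ᶜ = 0) (hP : μ (endpointSet P) = 0) (n : ℕ) :
    ∀ᵐ x ∂μ, x ∈ ⋃₀ P n := by
  have hIcc : ∀ᵐ x ∂μ, x ∈ Icc (0 : ℝ) 1 := hμ
  filter_upwards [hIcc, measure_eq_zero_iff_ae_notMem.1 hP] with x hx hxP
  by_contra hxn
  exact hxP (mem_iUnion.2 ⟨n, hx, hxn⟩)

/-- Proposition: a sequence of partitions with a sub-exponential number of intervals at
each depth has zero entropy a.e. -/
theorem zero_entropy_of_subexponential (lam : Measure ℝ) [IsProbabilityMeasure lam]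
    (hlam : lam (Set.Icc (0 : ℝ) 1)ᶜ = 0)
    (Ps : ℕ → Set (Set ℝ)) (hPs : ∀ n, IsTopPartition (Ps n))
    (hE : lam (endpointSet Ps) = 0)
    (hfin : ∀ n, (Ps n).Finite)
    (hcard : (fun n => Real.log ((Ps n).ncard)) =o[atTop] (fun n => (n : ℝ))) :
    ∀ᵐ x ∂lam,
      Tendsto (fun n => -Real.log ((lam (cell (Ps n) x)).toReal) / n) atTop (nhds 0) :=
  zero_entropy_of_subexponential_general
    (ae_mem_sUnion_of_measure_endpointSet_eq_zero hlam hE) hfin hcard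
end
end

section
/- Let f : ℕ → ℝ_{≥0} with f(n) → ∞ as n → ∞. Then there exists a sequence of partitions 𝒫 = {P_n}_{n∈ℕ} of [0,1] that is log-balanced a.e. with respect to the Lebesgue measure with weight function f. Moreover, if f is nondecreasing then 𝒫 can be chosen self-refining, and if n ↦ ⌊e^{f(n)}⌋ is strictly increasing then 𝒫 can be chosen strictly self-refining. -/
open MeasureTheory Filter Set Asymptotics

noncomputable section

/-!
Enumerate the dyadic rationals of `[0,1)` level by level as `0, 1/2, 1/4, 3/4, 1/8, 3/8, …` and cut
`[0,1]` at the first `N` of them. For `2 ^ k ≤ N ≤ 2 ^ (k + 1)` the cutting points contain all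
multiples of `2 ^ (-k)` and are multiples of `2 ^ (-(k + 1))`, so each of the `N` intervals has
length `1 / N` up to a factor `2`. With `N = ⌊e ^ f n⌋` the quantity `-log λ(I_n(x))` stays within a
bounded distance of `f n`, hence is asymptotic to it, and the partitions are nested because the
cutting points increase with `N`.
-/

/-- `a < b` are consecutive points of the set `D`; the last field says that no point of `D` lies
strictly between them. -/
structure IsGap {α : Type*} [LinearOrder α] (D : Set α) (a b : α) : Prop where
  left_mem : a ∈ D
  right_mem : b ∈ D
  lt : a < b
  le_or_le : ∀ c ∈ D, c ≤ a ∨ b ≤ c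

/-- The open intervals between consecutive points of `D`. For a finite set containing the endpoints
of an interval these form the partition of that interval cut out by `D`. -/
def gapIntervals {α : Type*} [LinearOrder α] (D : Set α) : Set (Set α) :=
  {I | ∃ a b, IsGap D a b ∧ I = Ioo a b}

section LinearOrder

variable {α : Type*} [LinearOrder α] {D D' : Set α} {a b a' b' x : α}

lemma IsGap.Ioo_mem_gapIntervals (h : IsGap D a b) : Ioo a b ∈ gapIntervals D :=
  ⟨a, b, h, rfl⟩

lemma IsGap.eq_of_mem_Ioo (h : IsGap D a b) (h' : IsGap D a' b') (hx : x ∈ Ioo a b)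
    (hx' : x ∈ Ioo a' b') : a = a' ∧ b = b' := by
  have := h.le_or_le a' h'.left_mem
  have := h.le_or_le b' h'.right_mem
  have := h'.le_or_le a h.left_mem
  have := h'.le_or_le b h.right_mem
  grind

lemma exists_isGap_mem_Ico (hD : D.Finite) (ha : a ∈ D) (hb : b ∈ D) (hx : x ∈ Ico a b) :
    ∃ c d, IsGap D c d ∧ x ∈ Ico c d := by
  obtain ⟨c, ⟨hcD, hcx⟩, hc⟩ :=
    exists_max_image (D ∩ Iic x) id (hD.inter_of_left _) ⟨a, ha, hx.1⟩
  obtain ⟨d, ⟨hdD, hxd⟩, hd⟩ :=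
    exists_min_image (D ∩ Ioi x) id (hD.inter_of_left _) ⟨b, hb, hx.2⟩
  refine ⟨c, d, ⟨hcD, hdD, hcx.trans_lt hxd, fun e he => ?_⟩, hcx, hxd⟩
  exact (le_or_gt e x).imp (fun h => hc e ⟨he, h⟩) (fun h => hd e ⟨he, h⟩)

lemma IsGap.exists_superset_mem_gapIntervals (h : IsGap D' a b) (hD : D.Finite) (hDD' : D ⊆ D')
    (ha' : a' ∈ D) (hb' : b' ∈ D) (haa' : a' ≤ a) (hbb' : b ≤ b') :
    ∃ J ∈ gapIntervals D, Ioo a b ⊆ J := by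
  obtain ⟨c, d, hcd, hac⟩ := exists_isGap_mem_Ico hD ha' hb' ⟨haa', h.lt.trans_le hbb'⟩
  have hbd : b ≤ d := (h.le_or_le d (hDD' hcd.right_mem)).resolve_left hac.2.not_ge
  exact ⟨Ioo c d, hcd.Ioo_mem_gapIntervals, Ioo_subset_Ioo hac.1 hbd⟩

lemma pairwiseDisjoint_gapIntervals (D : Set α) : (gapIntervals D).PairwiseDisjoint id := by
  rintro _ ⟨a, b, h, rfl⟩ _ ⟨a', b', h', rfl⟩ hne
  refine disjoint_left.2 fun x hx hx' => hne ?_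
  obtain ⟨rfl, rfl⟩ := h.eq_of_mem_Ioo h' hx hx'
  rfl

lemma finite_gapIntervals (hD : D.Finite) : (gapIntervals D).Finite := by
  refine ((hD.prod hD).image fun p => Ioo p.1 p.2).subset ?_
  rintro _ ⟨a, b, h, rfl⟩
  exact ⟨(a, b), ⟨h.left_mem, h.right_mem⟩, rfl⟩

end LinearOrder

lemma IsGap.cell_gapIntervals {D : Set ℝ} {a b x : ℝ} (h : IsGap D a b) (hx : x ∈ Ioo a b) :
    cell (gapIntervals D) x = Ioo a b := by
  refine (sUnion_subset ?_).antisymm (subset_sUnion_of_mem ⟨h.Ioo_mem_gapIntervals, hx⟩)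
  rintro _ ⟨⟨a', b', h', rfl⟩, hx'⟩
  obtain ⟨rfl, rfl⟩ := h.eq_of_mem_Ioo h' hx hx'
  rfl

/-- A finite set of points of `[0,1]` containing both endpoints, as used to cut `[0,1]` into
finitely many open intervals. -/
structure IsSubdivision (D : Set ℝ) : Prop where
  finite : D.Finite
  zero_mem : 0 ∈ D
  one_mem : 1 ∈ D
  subset_Icc : D ⊆ Icc 0 1

namespace IsSubdivision

variable {D D' : Set ℝ} {a b x : ℝ}

lemma Ioo_subset_Icc (hD : IsSubdivision D) (h : IsGap D a b) : Ioo a b ⊆ Icc 0 1 :=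
  Ioo_subset_Icc_self.trans
    (Icc_subset_Icc (hD.subset_Icc h.left_mem).1 (hD.subset_Icc h.right_mem).2)

lemma exists_isGap_mem_Ioo (hD : IsSubdivision D) (hx : x ∈ Icc 0 1) (hxD : x ∉ D) :
    ∃ a b, IsGap D a b ∧ x ∈ Ioo a b := by
  have hx1 : x ≠ 1 := fun h => hxD (h ▸ hD.one_mem)
  obtain ⟨a, b, h, hxab⟩ :=
    exists_isGap_mem_Ico hD.finite hD.zero_mem hD.one_mem ⟨hx.1, hx.2.lt_of_ne hx1⟩
  have hax : a ≠ x := fun e => hxD (e ▸ h.left_mem)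
  exact ⟨a, b, h, hxab.1.lt_of_ne hax, hxab.2⟩

lemma biUnion_closure_gapIntervals (hD : IsSubdivision D) :
    ⋃ I ∈ gapIntervals D, closure I = Icc 0 1 := by
  have hclosed : IsClosed (⋃ I ∈ gapIntervals D, closure I) :=
    (finite_gapIntervals hD.finite).isClosed_biUnion fun _ _ => isClosed_closure
  have hIco : Ico 0 1 ⊆ ⋃ I ∈ gapIntervals D, closure I := fun x hx => by
    obtain ⟨a, b, h, hxab⟩ := exists_isGap_mem_Ico hD.finite hD.zero_mem hD.one_mem hx
    refine mem_biUnion h.Ioo_mem_gapIntervals ?_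
    rw [closure_Ioo h.lt.ne]
    exact Ico_subset_Icc_self hxab
  refine Subset.antisymm (iUnion₂_subset ?_) ?_
  · rintro _ ⟨a, b, h, rfl⟩
    exact closure_minimal (hD.Ioo_subset_Icc h) isClosed_Icc
  · rw [← closure_Ico (zero_ne_one (α := ℝ))]
    exact closure_minimal hIco hclosed

lemma isTopPartition_gapIntervals (hD : IsSubdivision D) : IsTopPartition (gapIntervals D) := by
  refine ⟨(finite_gapIntervals hD.finite).countable, ?_, pairwiseDisjoint_gapIntervals D,
    hD.biUnion_closure_gapIntervals⟩
  rintro _ ⟨a, b, h, rfl⟩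
  exact ⟨a, b, h.lt, (hD.subset_Icc h.left_mem).1, (hD.subset_Icc h.right_mem).2, rfl⟩

lemma Icc_diff_sUnion_gapIntervals (hD : IsSubdivision D) :
    Icc 0 1 \ ⋃₀ gapIntervals D = D := by
  refine Subset.antisymm ?_ fun x hx => ⟨hD.subset_Icc hx, ?_⟩
  · rintro x ⟨hx, hxI⟩
    by_contra hxD
    obtain ⟨a, b, h, hxab⟩ := hD.exists_isGap_mem_Ioo hx hxD
    exact hxI ⟨Ioo a b, h.Ioo_mem_gapIntervals, hxab⟩
  · rintro ⟨_, ⟨a, b, h, rfl⟩, hxab⟩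
    exact (h.le_or_le x hx).elim hxab.1.not_ge hxab.2.not_ge

lemma eq_of_gapIntervals_eq (hD : IsSubdivision D) (hD' : IsSubdivision D')
    (h : gapIntervals D = gapIntervals D') : D = D' := by
  rw [← hD.Icc_diff_sUnion_gapIntervals, h, hD'.Icc_diff_sUnion_gapIntervals]

lemma toReal_volume_restrict_cell (hD : IsSubdivision D) (h : IsGap D a b) (hx : x ∈ Ioo a b) :
    ((volume.restrict (Icc 0 1)) (cell (gapIntervals D) x)).toReal = b - a := by
  rw [h.cell_gapIntervals hx, Measure.restrict_apply measurableSet_Ioo,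
    inter_eq_left.2 (hD.Ioo_subset_Icc h), Real.volume_Ioo,
    ENNReal.toReal_ofReal (sub_nonneg.2 h.lt.le)]

end IsSubdivision

lemma tendsto_div_nhds_one_of_abs_sub_le {ι : Type*} {l : Filter ι} {u v : ι → ℝ} {C : ℝ}
    (hv : Tendsto v l atTop) (huv : ∀ i, |u i - v i| ≤ C) :
    Tendsto (fun i => u i / v i) l (nhds 1) := by
  have hbounded : (u - v) =O[l] (fun _ => (1 : ℝ)) :=
    .of_bound C (.of_forall fun i => by simpa using huv i)
  have hequiv : u ~[l] v := hbounded.trans_isLittleO <|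
    isLittleO_const_left.2 (.inr (tendsto_norm_atTop_atTop.comp hv))
  exact (isEquivalent_iff_tendsto_one (hv.eventually_ne_atTop 0)).1 hequiv

section SubdivisionSequence

variable {D : ℕ → Set ℝ}

lemma endpointSet_gapIntervals (hD : ∀ n, IsSubdivision (D n)) :
    endpointSet (fun n => gapIntervals (D n)) = ⋃ n, D n :=
  iUnion_congr fun n => (hD n).Icc_diff_sUnion_gapIntervals

lemma logBalancedAE_gapIntervals (hD : ∀ n, IsSubdivision (D n)) {f : ℕ → ℝ} {C : ℝ}
    (hf : Tendsto f atTop atTop)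
    (hC : ∀ n a b, IsGap (D n) a b → |-Real.log (b - a) - f n| ≤ C) :
    LogBalancedAE (volume.restrict (Icc 0 1)) (fun n => gapIntervals (D n)) f := by
  have hcountable : (⋃ n, D n).Countable := countable_iUnion fun n => (hD n).finite.countable
  refine ⟨?_, hf, ?_⟩
  · rw [endpointSet_gapIntervals hD]
    exact hcountable.measure_zero _
  filter_upwards [hcountable.ae_notMem _, ae_restrict_mem measurableSet_Icc] with x hxD hx
  refine tendsto_div_nhds_one_of_abs_sub_le hf (C := C) fun n => ?_
  obtain ⟨a, b, h, hxab⟩ := (hD n).exists_isGap_mem_Ioo hx fun hn => hxD (mem_iUnion_of_mem n hn)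
  rw [(hD n).toReal_volume_restrict_cell h hxab]
  exact hC n a b h

lemma selfRefining_gapIntervals (hD : ∀ n, IsSubdivision (D n)) (hmono : Monotone D) :
    SelfRefining (fun n => gapIntervals (D n)) := by
  rintro n _ ⟨a, b, h, rfl⟩
  exact h.exists_superset_mem_gapIntervals (hD n).finite (hmono n.le_succ)
    (hD n).zero_mem (hD n).one_mem
    ((hD (n + 1)).subset_Icc h.left_mem).1 ((hD (n + 1)).subset_Icc h.right_mem).2

lemma strictSelfRefining_gapIntervals (hD : ∀ n, IsSubdivision (D n)) (hmono : StrictMono D) :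
    StrictSelfRefining (fun n => gapIntervals (D n)) :=
  ⟨selfRefining_gapIntervals hD hmono.monotone, fun n h =>
    (hmono n.lt_succ_self).ne' ((hD (n + 1)).eq_of_gapIntervals_eq (hD n) h)⟩

end SubdivisionSequence

/-- The points `j / n` with `0 ≤ j ≤ n`, cutting `[0,1]` into `n` intervals of equal length; for
`n = 0` division by zero leaves only the point `0`. -/
def uniformGrid (n : ℕ) : Set ℝ :=
  (fun j : ℕ => (j : ℝ) / n) '' Iic n

lemma one_div_le_sub_of_mem_uniformGrid {n : ℕ} {a b : ℝ} (ha : a ∈ uniformGrid n)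
    (hb : b ∈ uniformGrid n) (hab : a < b) : 1 / (n : ℝ) ≤ b - a := by
  obtain ⟨i, -, rfl⟩ := ha
  obtain ⟨j, -, rfl⟩ := hb
  have hij : i < j := by
    contrapose! hab
    gcongr
  have hsub : (1 : ℝ) ≤ j - i := by
    rw [le_sub_iff_add_le']
    exact_mod_cast hij
  rw [← sub_div]
  exact div_le_div_of_nonneg_right hsub n.cast_nonneg

lemma IsGap.sub_le_of_uniformGrid_subset {D : Set ℝ} {a b : ℝ} {n : ℕ} (h : IsGap D a b)
    (hn : n ≠ 0) (hD : D ⊆ Icc 0 1) (hgrid : uniformGrid n ⊆ D) : b - a ≤ 1 / n := by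
  have hn : (0 : ℝ) < n := by positivity
  have ha : 0 ≤ a * n := mul_nonneg (hD h.left_mem).1 hn.le
  have ha1 : a < 1 := h.lt.trans_le (hD h.right_mem).2
  set j := ⌊a * n⌋₊
  have hj : j + 1 ≤ n := (Nat.floor_lt ha).2 (mul_lt_of_lt_one_left hn ha1)
  have hja : (j : ℝ) / n ≤ a := (div_le_iff₀ hn).2 (Nat.floor_le ha)
  have haj : a < (j + 1) / n := (lt_div_iff₀ hn).2 (Nat.lt_floor_add_one _)
  have hmem : ((j : ℝ) + 1) / n ∈ D := hgrid ⟨j + 1, hj, by push_cast; rfl⟩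
  have hb : b ≤ (j + 1) / n := (h.le_or_le _ hmem).resolve_left haj.not_ge
  rw [add_div] at hb
  linarith

/-- The dyadic rationals of `[0,1)`, enumerated level by level as `0, 1/2, 1/4, 3/4, 1/8, 3/8, …`:
for `r < 2 ^ k` the point of index `2 ^ k + r` is `(2 * r + 1) / 2 ^ (k + 1)`. The number of binary
digits `Nat.size m` selects the level, so that index `0` needs no separate case. -/
def dyadicPoint (m : ℕ) : ℝ :=
  (2 * m + 1) / 2 ^ m.size - 1

lemma two_pow_size_le_two_mul_add_one (m : ℕ) : 2 ^ m.size ≤ 2 * m + 1 := by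
  rw [← Nat.lt_size, ← Nat.bit_true_apply, Nat.size_bit (by simp)]
  exact Nat.lt_succ_self _

lemma dyadicPoint_mem_Ico (m : ℕ) : dyadicPoint m ∈ Ico 0 1 := by
  have hle : (2 : ℝ) ^ m.size ≤ 2 * m + 1 := by exact_mod_cast two_pow_size_le_two_mul_add_one m
  have hlt : (m : ℝ) + 1 ≤ 2 ^ m.size := by exact_mod_cast Nat.lt_size_self m
  rw [dyadicPoint, mem_Ico, sub_nonneg, one_le_div (by positivity), sub_lt_iff_lt_add,
    div_lt_iff₀ (by positivity)]
  constructor <;> linarith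

lemma dyadicPoint_zero : dyadicPoint 0 = 0 := by
  simp [dyadicPoint]

lemma dyadicPoint_injective : Function.Injective dyadicPoint := by
  intro m n h
  have hmul : (2 * m + 1) * 2 ^ n.size = (2 * n + 1) * 2 ^ m.size := by
    rw [dyadicPoint, dyadicPoint, sub_left_inj, div_eq_div_iff (by positivity) (by positivity)] at h
    exact_mod_cast h
  have hcoprime (i j : ℕ) : Nat.Coprime (2 ^ i) (2 * j + 1) :=
    Nat.Coprime.pow_left i (by simp)
  have hpow : 2 ^ m.size = 2 ^ n.size := Nat.dvd_antisymm
    ((hcoprime _ _).dvd_of_dvd_mul_left (Dvd.intro_left _ hmul.symm))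
    ((hcoprime _ _).dvd_of_dvd_mul_left (Dvd.intro_left _ hmul))
  rw [hpow] at hmul
  have := Nat.eq_of_mul_eq_mul_right (by positivity) hmul
  lia

lemma dyadicPoint_mem_image_Iio {m k : ℕ} (hm : m < 2 ^ k) :
    dyadicPoint m ∈ (fun j : ℕ => (j : ℝ) / 2 ^ k) '' Iio (2 ^ k) := by
  obtain ⟨d, rfl⟩ := Nat.exists_eq_add_of_le (Nat.size_le.2 hm)
  have heq : dyadicPoint m =
      (((2 * m + 1 - 2 ^ m.size) * 2 ^ d : ℕ) : ℝ) / 2 ^ (m.size + d) := by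
    push_cast [two_pow_size_le_two_mul_add_one m]
    rw [dyadicPoint, pow_add]
    field_simp
  refine ⟨_, ?_, heq.symm⟩
  have hlt := (dyadicPoint_mem_Ico m).2
  rw [heq, div_lt_one (by positivity)] at hlt
  exact_mod_cast hlt

lemma dyadicPoint_image_Iio_two_pow (k : ℕ) :
    dyadicPoint '' Iio (2 ^ k) = (fun j : ℕ => (j : ℝ) / 2 ^ k) '' Iio (2 ^ k) := by
  -- An injective map between sets of the same cardinality `2 ^ k` is onto.
  refine eq_of_subset_of_ncard_le ?_ ?_ ((finite_Iio _).image _)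
  · rintro _ ⟨m, hm, rfl⟩
    exact dyadicPoint_mem_image_Iio hm
  · rw [ncard_image_of_injective _ dyadicPoint_injective]
    exact ncard_image_le (finite_Iio _)

/-- The first `N` dyadic rationals and `1`: for `N ≠ 0`, the points cutting `[0,1]` into `N`
intervals. -/
def dyadicPoints (N : ℕ) : Set ℝ :=
  insert 1 (dyadicPoint '' Iio N)

lemma dyadicPoints_strictMono : StrictMono dyadicPoints := by
  intro M N hMN
  have hsub : dyadicPoints M ⊆ dyadicPoints N :=
    insert_subset_insert (image_mono (Iio_subset_Iio hMN.le))
  refine (ssubset_iff_of_subset hsub).2 ⟨dyadicPoint M, .inr ⟨M, hMN, rfl⟩, ?_⟩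
  rintro (h | h)
  · exact (dyadicPoint_mem_Ico M).2.ne h
  · exact self_notMem_Iio (dyadicPoint_injective.mem_set_image.1 h)

lemma isSubdivision_dyadicPoints {N : ℕ} (hN : N ≠ 0) : IsSubdivision (dyadicPoints N) where
  finite := ((finite_Iio N).image _).insert 1
  zero_mem := .inr ⟨0, Nat.pos_of_ne_zero hN, dyadicPoint_zero⟩
  one_mem := .inl rfl
  subset_Icc := insert_subset (by simp) <|
    image_subset_iff.2 fun m _ => Ico_subset_Icc_self (dyadicPoint_mem_Ico m)

lemma dyadicPoints_two_pow (k : ℕ) : dyadicPoints (2 ^ k) = uniformGrid (2 ^ k) := by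
  rw [dyadicPoints, dyadicPoint_image_Iio_two_pow, uniformGrid, ← Iio_insert, image_insert_eq]
  simp

lemma IsGap.sub_mem_Icc_of_dyadicPoints {N : ℕ} {a b : ℝ} (h : IsGap (dyadicPoints N) a b)
    (hN : N ≠ 0) : b - a ∈ Icc (1 / (2 * N : ℝ)) (2 / N) := by
  have hle := Nat.pow_log_le_self 2 hN
  have hlt := Nat.lt_pow_succ_log_self one_lt_two N
  set k := Nat.log 2 N
  have hlower : 1 / ((2 ^ (k + 1) : ℕ) : ℝ) ≤ b - a := by
    have hsub : dyadicPoints N ⊆ uniformGrid (2 ^ (k + 1)) :=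
      dyadicPoints_two_pow (k + 1) ▸ dyadicPoints_strictMono.monotone hlt.le
    exact one_div_le_sub_of_mem_uniformGrid (hsub h.left_mem) (hsub h.right_mem) h.lt
  have hupper : b - a ≤ 1 / ((2 ^ k : ℕ) : ℝ) :=
    h.sub_le_of_uniformGrid_subset (by positivity) (isSubdivision_dyadicPoints hN).subset_Icc
      (dyadicPoints_two_pow k ▸ dyadicPoints_strictMono.monotone hle)
  have hle' : (2 : ℝ) ^ k ≤ N := by exact_mod_cast hle
  have hlt' : (N : ℝ) < 2 ^ k * 2 := by exact_mod_cast hlt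
  push_cast [pow_succ] at hlower hupper
  constructor
  · refine le_trans ?_ hlower
    exact one_div_le_one_div_of_le (by positivity) (by linarith)
  · refine hupper.trans ?_
    rw [div_le_div_iff₀ (by positivity) (by positivity)]
    linarith

lemma floor_exp_ne_zero {y : ℝ} (hy : 0 ≤ y) : ⌊Real.exp y⌋₊ ≠ 0 :=
  (Nat.floor_pos.2 (Real.one_le_exp hy)).ne'

lemma IsGap.abs_neg_log_length_sub_le {y a b : ℝ} (hy : 0 ≤ y)
    (h : IsGap (dyadicPoints ⌊Real.exp y⌋₊) a b) :
    |-Real.log (b - a) - y| ≤ Real.log 4 := by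
  have hle := Nat.floor_le (Real.exp_pos y).le
  have hlt := Nat.lt_floor_add_one (Real.exp y)
  obtain ⟨hlower, hupper⟩ := h.sub_mem_Icc_of_dyadicPoints (floor_exp_ne_zero hy)
  have hN : (1 : ℝ) ≤ ⌊Real.exp y⌋₊ := by
    exact_mod_cast Nat.one_le_iff_ne_zero.2 (floor_exp_ne_zero hy)
  set N : ℝ := (⌊Real.exp y⌋₊ : ℝ)
  have hpos : 0 < b - a := sub_pos.2 h.lt
  have hlow : 4⁻¹ ≤ Real.exp y * (b - a) := calc
    (4⁻¹ : ℝ) ≤ N * (1 / (2 * N)) := by field_simp; norm_num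
    _ ≤ Real.exp y * (b - a) := by gcongr
  have hupp : Real.exp y * (b - a) ≤ 4 := calc
    Real.exp y * (b - a) ≤ (2 * N) * (2 / N) := by gcongr; linarith
    _ = 4 := by field_simp; norm_num
  have hlog : -Real.log (b - a) - y = -Real.log (Real.exp y * (b - a)) := by
    rw [Real.log_mul (Real.exp_ne_zero y) hpos.ne', Real.log_exp]
    ring
  rw [hlog, abs_neg, abs_le, ← Real.log_inv]
  exact ⟨Real.log_le_log (by norm_num) hlow, Real.log_le_log (by positivity) hupp⟩

/-- Proposition: realization of any prescribed weight function tending to infinity by an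
a.e. log-balanced sequence of partitions (with respect to Lebesgue measure on `[0,1]`). -/
theorem realization (f : ℕ → ℝ) (hf0 : ∀ n, 0 ≤ f n)
    (htop : Tendsto f atTop atTop) :
    ∃ Ps : ℕ → Set (Set ℝ),
      (∀ n, IsTopPartition (Ps n)) ∧
      LogBalancedAE (volume.restrict (Set.Icc (0 : ℝ) 1)) Ps f ∧
      (Monotone f → SelfRefining Ps) ∧
      (StrictMono (fun n => ⌊Real.exp (f n)⌋₊) → StrictSelfRefining Ps) := by
  let D n := dyadicPoints ⌊Real.exp (f n)⌋₊
  have hD n : IsSubdivision (D n) := isSubdivision_dyadicPoints (floor_exp_ne_zero (hf0 n))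
  refine ⟨fun n => gapIntervals (D n), fun n => (hD n).isTopPartition_gapIntervals,
    logBalancedAE_gapIntervals hD htop fun n _ _ h => h.abs_neg_log_length_sub_le (hf0 n),
    fun hmono => selfRefining_gapIntervals hD ?_,
    fun hstrict => strictSelfRefining_gapIntervals hD (dyadicPoints_strictMono.comp hstrict)⟩
  exact dyadicPoints_strictMono.monotone.comp
    (Nat.floor_mono.comp (Real.exp_monotone.comp hmono))
end
end

section
/- For Lebesgue-almost every x ∈ [0,1], −log |I_n^ℱ(x)| / (2 log n) → 1 as n → ∞, where |·| denotes Lebesgue measure (length); that is, the Farey sequence of partitions ℱ is a.e. log-balanced with respect to the Lebesgue measure with weight function f_ℱ(n) = 2 log n (for n ≥ 1). -/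
open MeasureTheory Filter Set

noncomputable section

/-- The set `E_n^ℱ` of endpoints of the Farey partition `F_n`: rationals of `[0,1]` whose
denominator in lowest terms is at most `n+1`. -/
def fareyPts (n : ℕ) : Set ℝ :=
  {x | ∃ p q : ℕ, q ≠ 0 ∧ q ≤ n + 1 ∧ p ≤ q ∧ Nat.gcd p q = 1 ∧ x = (p : ℝ) / q}

/-- The interval `I_n^ℱ(x)` of the Farey partition `F_n` containing `x`: the open interval
between the largest Farey point of order `n+1` below `x` and the smallest one above `x`. -/
def fareyInterval (n : ℕ) (x : ℝ) : Set ℝ :=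
  Set.Ioo (sSup (fareyPts n ∩ Set.Iio x)) (sInf (fareyPts n ∩ Set.Ioi x))

/-- The partial quotient `a_{m+1}` of the continued fraction expansion of `x ∈ (0,1)`,
obtained from the Gauss map: `cfa x m = ⌊1 / T_G^m x⌋` where `T_G y = {1/y}`. -/
def cfa (x : ℝ) (m : ℕ) : ℕ := ⌊1 / ((fun y => Int.fract (1 / y))^[m] x)⌋₊

/-- Numerators of the convergents of `x`, shifted by one: `cfp x (m+1) = p_m`, with
`p_{-1} = 1`, `p_0 = 0`, `p_{m+1} = a_{m+1} p_m + p_{m-1}`. -/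
def cfp (x : ℝ) : ℕ → ℕ
  | 0 => 1
  | 1 => 0
  | m + 2 => cfa x m * cfp x (m + 1) + cfp x m

/-- Denominators of the convergents of `x`, shifted by one: `cfq x (m+1) = q_m`, with
`q_{-1} = 0`, `q_0 = 1`, `q_{m+1} = a_{m+1} q_m + q_{m-1}`. -/
def cfq (x : ℝ) : ℕ → ℕ
  | 0 => 0
  | 1 => 1
  | m + 2 => cfa x m * cfq x (m + 1) + cfq x m

/-- The fundamental interval `I_n^{𝒞ℱ}(x)` of depth `n` of the continued fraction
expansion: the open interval with endpoints `p_n/q_n` and `(p_n+p_{n-1})/(q_n+q_{n-1})`,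
the former being the left endpoint iff `n` is even. -/
def cfInterval (x : ℝ) (n : ℕ) : Set ℝ :=
  if Even n then
    Set.Ioo ((cfp x (n + 1) : ℝ) / (cfq x (n + 1) : ℝ))
      (((cfp x (n + 1) + cfp x n : ℕ) : ℝ) / ((cfq x (n + 1) + cfq x n : ℕ) : ℝ))
  else
    Set.Ioo (((cfp x (n + 1) + cfp x n : ℕ) : ℝ) / ((cfq x (n + 1) + cfq x n : ℕ) : ℝ))
      ((cfp x (n + 1) : ℝ) / (cfq x (n + 1) : ℝ))

/-- The Lochs index `L_n(x, 𝒞ℱ, ℱ)` from the continued fraction sequence of partitions to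
the Farey sequence of partitions. -/
def lochsCFtoF (x : ℝ) (n : ℕ) : ℕ :=
  sSup {ℓ : ℕ | cfInterval x n ⊆ fareyInterval ℓ x}

/-- The Lochs index `L_n(x, ℱ, 𝒞ℱ)` from the Farey sequence of partitions to the
continued fraction sequence of partitions. -/
def lochsFtoCF (x : ℝ) (n : ℕ) : ℕ :=
  sSup {ℓ : ℕ | fareyInterval n x ⊆ cfInterval x ℓ}

/-!
Consecutive Farey fractions `a / b < c / d` of order `n + 1` satisfy `b * c - a * d = 1` and
`n + 1 < b + d`, so the Farey interval around `x` has length `1 / (b * d)`. As `b, d ≤ n + 1`, this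
is at least `1 / (n + 1) ^ 2`. In the other direction, the larger denominator exceeds `(n + 1) / 2`,
so an interval of length `L` has an endpoint `m / k` with `k ≤ 2 / ((n + 1) * L)` and
`|x - m / k| ≤ L`. Almost every `x` satisfies `|x - m / k| ≥ C / k ^ p` for each `p > 2`, which
forces `L ^ (p - 1) = O(n ^ (-p))`; let `p` tend to `2`.
-/

/-- `a / b < x < c / d`, where `a / b` and `c / d` are consecutive fractions of the Farey sequence
of order `N` in `[0, 1]`. Adjacency is encoded by the unimodular relation together with
`N < b + d`; with the bounds on `b` and `d`, the latter also excludes zero denominators. -/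
structure IsFareyBracket (N : ℕ) (x : ℝ) (a b c d : ℕ) : Prop where
  left_lt : (a : ℝ) / b < x
  lt_right : x < (c : ℝ) / d
  num_mul_den : c * b = a * d + 1
  left_num_le : a ≤ b
  right_num_le : c ≤ d
  left_den_le : b ≤ N
  right_den_le : d ≤ N
  lt_den_add_den : N < b + d

lemma den_add_den_le_of_between {a b c d p q : ℕ} (hdet : c * b = a * d + 1)
    (hleft : a * q < p * b) (hright : p * d < c * q) : b + d ≤ q := by
  zify at *
  calc (b + d : ℤ) = b * 1 + d * 1 := by ring
    _ ≤ b * (c * q - p * d) + d * (p * b - a * q) := by gcongr <;> linarith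
    _ = q := by linear_combination (q : ℤ) * hdet

lemma coprime_of_mul_eq_mul_add_one {a b c d : ℕ} (h : c * b = a * d + 1) :
    a.Coprime b ∧ c.Coprime d := by
  zify at h
  simp only [← Nat.isCoprime_iff_coprime]
  exact ⟨⟨-d, c, by linear_combination h⟩, ⟨b, -a, by linear_combination h⟩⟩

lemma ne_intCast_div_natCast_of_irrational {x : ℝ} (hx : Irrational x) (m : ℤ) (k : ℕ) :
    x ≠ m / k := by
  have := hx.ne_rat (m / k)
  push_cast at this
  exact this

namespace IsFareyBracket

variable {N n : ℕ} {x : ℝ} {a b c d : ℕ}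

lemma left_den_pos (h : IsFareyBracket N x a b c d) : 0 < b := by
  have := h.lt_den_add_den
  have := h.right_den_le
  omega

lemma right_den_pos (h : IsFareyBracket N x a b c d) : 0 < d := by
  have := h.lt_den_add_den
  have := h.left_den_le
  omega

lemma right_sub_left (h : IsFareyBracket N x a b c d) :
    (c : ℝ) / d - (a : ℝ) / b = 1 / ((b : ℝ) * d) := by
  have hb : (b : ℝ) ≠ 0 := by exact_mod_cast h.left_den_pos.ne'
  have hd : (d : ℝ) ≠ 0 := by exact_mod_cast h.right_den_pos.ne'
  have hdet : (c : ℝ) * b = a * d + 1 := by exact_mod_cast h.num_mul_den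
  field_simp
  linarith

lemma exists_succ (h : IsFareyBracket N x a b c d) (hx : Irrational x) :
    ∃ a' b' c' d', IsFareyBracket (N + 1) x a' b' c' d' := by
  obtain ⟨hleft, hright, hdet, hab, hcd, hb, hd, hbd⟩ := h
  by_cases hN : N + 1 < b + d
  · exact ⟨a, b, c, d, hleft, hright, hdet, hab, hcd, by omega, by omega, hN⟩
  · have hne : x ≠ ((a + c : ℕ) : ℝ) / (b + d : ℕ) := by
      simpa only [Int.cast_natCast] using
        ne_intCast_div_natCast_of_irrational hx (a + c : ℕ) (b + d)
    rcases lt_or_gt_of_ne hne with hlt | hgt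
    · exact ⟨a, b, a + c, b + d, hleft, hlt, by linarith, hab, by omega, by omega, by omega,
        by omega⟩
    · exact ⟨a + c, b + d, c, d, hgt, hright, by linarith, by omega, hcd, by omega, by omega,
        by omega⟩

lemma den_add_den_le (h : IsFareyBracket N x a b c d) {p q : ℕ} (hq : q ≠ 0)
    (hleft : (a : ℝ) / b < (p : ℝ) / q) (hright : (p : ℝ) / q < (c : ℝ) / d) : b + d ≤ q := by
  have hb : (0 : ℝ) < b := by exact_mod_cast h.left_den_pos
  have hd : (0 : ℝ) < d := by exact_mod_cast h.right_den_pos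
  have hq : (0 : ℝ) < q := by exact_mod_cast Nat.pos_of_ne_zero hq
  rw [div_lt_div_iff₀ hb hq] at hleft
  rw [div_lt_div_iff₀ hq hd] at hright
  exact den_add_den_le_of_between h.num_mul_den (by exact_mod_cast hleft)
    (by exact_mod_cast hright)

lemma notMem_fareyPts (h : IsFareyBracket (n + 1) x a b c d) {y : ℝ}
    (hleft : (a : ℝ) / b < y) (hright : y < (c : ℝ) / d) : y ∉ fareyPts n := by
  rintro ⟨p, q, hq, hqn, -, -, rfl⟩
  have := h.den_add_den_le hq hleft hright
  have := h.lt_den_add_den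
  omega

lemma isGreatest_left (h : IsFareyBracket (n + 1) x a b c d) :
    IsGreatest (fareyPts n ∩ Iio x) ((a : ℝ) / b) := by
  refine ⟨⟨⟨a, b, h.left_den_pos.ne', h.left_den_le, h.left_num_le,
    (coprime_of_mul_eq_mul_add_one h.num_mul_den).1, rfl⟩, h.left_lt⟩, fun y hy => ?_⟩
  exact not_lt.1 fun hlt => h.notMem_fareyPts hlt (hy.2.trans h.lt_right) hy.1

lemma isLeast_right (h : IsFareyBracket (n + 1) x a b c d) :
    IsLeast (fareyPts n ∩ Ioi x) ((c : ℝ) / d) := by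
  refine ⟨⟨⟨c, d, h.right_den_pos.ne', h.right_den_le, h.right_num_le,
    (coprime_of_mul_eq_mul_add_one h.num_mul_den).2, rfl⟩, h.lt_right⟩, fun y hy => ?_⟩
  exact not_lt.1 fun hlt => h.notMem_fareyPts (h.left_lt.trans hy.2) hlt hy.1

lemma fareyInterval_eq (h : IsFareyBracket (n + 1) x a b c d) :
    fareyInterval n x = Ioo ((a : ℝ) / b) ((c : ℝ) / d) := by
  rw [fareyInterval, h.isGreatest_left.csSup_eq, h.isLeast_right.csInf_eq]

lemma toReal_volume_fareyInterval (h : IsFareyBracket (n + 1) x a b c d) :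
    (volume (fareyInterval n x)).toReal = 1 / ((b : ℝ) * d) := by
  rw [h.fareyInterval_eq, Real.volume_Ioo, h.right_sub_left,
    ENNReal.toReal_ofReal (by positivity)]

lemma abs_sub_left_le (h : IsFareyBracket N x a b c d) :
    |x - (a : ℝ) / b| ≤ 1 / ((b : ℝ) * d) := by
  rw [abs_of_pos (sub_pos.2 h.left_lt), ← h.right_sub_left]
  linarith [h.lt_right]

lemma abs_sub_right_le (h : IsFareyBracket N x a b c d) :
    |x - (c : ℝ) / d| ≤ 1 / ((b : ℝ) * d) := by
  rw [abs_of_neg (sub_neg.2 h.lt_right), ← h.right_sub_left]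
  linarith [h.left_lt]

end IsFareyBracket

section FareyLength

variable {x : ℝ}

lemma exists_isFareyBracket (hx : Irrational x) (hx01 : x ∈ Ioo 0 1) (n : ℕ) :
    ∃ a b c d, IsFareyBracket (n + 1) x a b c d := by
  induction n with
  | zero => exact ⟨0, 1, 1, 1, by constructor <;> simp [hx01.1, hx01.2]⟩
  | succ n ih =>
    obtain ⟨a, b, c, d, h⟩ := ih
    exact h.exists_succ hx

lemma one_div_sq_le_toReal_volume_fareyInterval (hx : Irrational x) (hx01 : x ∈ Ioo 0 1)
    (n : ℕ) :
    1 / ((n : ℝ) + 1) ^ 2 ≤ (volume (fareyInterval n x)).toReal := by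
  obtain ⟨a, b, c, d, h⟩ := exists_isFareyBracket hx hx01 n
  have hb : (0 : ℝ) < b := by exact_mod_cast h.left_den_pos
  have hd : (0 : ℝ) < d := by exact_mod_cast h.right_den_pos
  have hbn : (b : ℝ) ≤ n + 1 := by exact_mod_cast h.left_den_le
  have hdn : (d : ℝ) ≤ n + 1 := by exact_mod_cast h.right_den_le
  rw [h.toReal_volume_fareyInterval, sq]
  gcongr

lemma toReal_volume_fareyInterval_pos (hx : Irrational x) (hx01 : x ∈ Ioo 0 1) (n : ℕ) :
    0 < (volume (fareyInterval n x)).toReal :=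
  lt_of_lt_of_le (by positivity) (one_div_sq_le_toReal_volume_fareyInterval hx hx01 n)

lemma exists_abs_sub_div_le_toReal_volume_fareyInterval (hx : Irrational x) (hx01 : x ∈ Ioo 0 1)
    (n : ℕ) :
    ∃ m k : ℕ, 0 < k ∧ |x - (m : ℝ) / k| ≤ (volume (fareyInterval n x)).toReal ∧
      (k : ℝ) * (n + 1) * (volume (fareyInterval n x)).toReal ≤ 2 := by
  obtain ⟨a, b, c, d, h⟩ := exists_isFareyBracket hx hx01 n
  have hb : (0 : ℝ) < b := by exact_mod_cast h.left_den_pos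
  have hd : (0 : ℝ) < d := by exact_mod_cast h.right_den_pos
  have hbd : (n : ℝ) + 1 ≤ b + d := by exact_mod_cast h.lt_den_add_den.le
  rw [h.toReal_volume_fareyInterval]
  rcases le_total (b : ℝ) d with hle | hle
  · refine ⟨a, b, h.left_den_pos, h.abs_sub_left_le, ?_⟩
    rw [mul_one_div, div_le_iff₀ (by positivity)]
    calc (b : ℝ) * (n + 1) ≤ b * (d + d) := mul_le_mul_of_nonneg_left (by linarith) hb.le
      _ = 2 * (b * d) := by ring
  · refine ⟨c, d, h.right_den_pos, h.abs_sub_right_le, ?_⟩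
    rw [mul_one_div, div_le_iff₀ (by positivity)]
    calc (d : ℝ) * (n + 1) ≤ d * (b + b) := mul_le_mul_of_nonneg_left (by linarith) hd.le
      _ = 2 * (b * d) := by ring

lemma neg_log_toReal_volume_fareyInterval_le (hx : Irrational x) (hx01 : x ∈ Ioo 0 1) (n : ℕ) :
    -Real.log (volume (fareyInterval n x)).toReal ≤ 2 * Real.log (n + 1) := by
  have := Real.log_le_log (by positivity) (one_div_sq_le_toReal_volume_fareyInterval hx hx01 n)
  rw [one_div, Real.log_inv, Real.log_pow, Nat.cast_ofNat] at this
  linarith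

lemma le_neg_log_toReal_volume_fareyInterval (hx : Irrational x) (hx01 : x ∈ Ioo 0 1) {p C : ℝ}
    (hp : 0 ≤ p) (hC : 0 < C) (hdist : ∀ (k : ℕ) (m : ℤ), 0 < k → C ≤ |x - m / k| * (k : ℝ) ^ p)
    (n : ℕ) :
    p * Real.log (n + 1) - (p * Real.log 2 - Real.log C) ≤
      (p - 1) * -Real.log (volume (fareyInterval n x)).toReal := by
  obtain ⟨m, k, hk, hclose, hsmall⟩ :=
    exists_abs_sub_div_le_toReal_volume_fareyInterval hx hx01 n
  have hLpos := toReal_volume_fareyInterval_pos hx hx01 n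
  set L := (volume (fareyInterval n x)).toReal
  have hkpos : (0 : ℝ) < k := by exact_mod_cast hk
  have hClog : Real.log C ≤ Real.log L + p * Real.log k := by
    rw [← Real.log_rpow hkpos, ← Real.log_mul hLpos.ne' (by positivity)]
    refine Real.log_le_log hC ((hdist k m hk).trans ?_)
    rw [Int.cast_natCast]
    gcongr
  have hklog : Real.log k + Real.log (n + 1) + Real.log L ≤ Real.log 2 := by
    rw [← Real.log_mul (by positivity) (by positivity), ← Real.log_mul (by positivity) hLpos.ne']
    exact Real.log_le_log (by positivity) hsmall
  linear_combination hClog + p * hklog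

end FareyLength

lemma exists_forall_le_abs_sub_mul_rpow_of_not_liouvilleWith {x p : ℝ} (hx : Irrational x)
    (hp : ¬ LiouvilleWith p x) :
    ∃ C : ℝ, 0 < C ∧ ∀ (k : ℕ) (m : ℤ), 0 < k → C ≤ |x - m / k| * (k : ℝ) ^ p := by
  have hp1 : 1 ≤ p := le_of_not_ge fun h => hp ((liouvilleWith_one x).mono h)
  have hlarge : ∀ᶠ k : ℕ in atTop, ∀ m : ℤ, 1 ≤ |x - m / k| * (k : ℝ) ^ p := by
    have := not_frequently.1 fun h => hp ⟨1, h⟩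
    filter_upwards [this, eventually_gt_atTop 0] with k hk hkpos m
    exact (div_le_iff₀ (by positivity)).1 <| not_lt.1 fun hlt =>
      hk ⟨m, ne_intCast_div_natCast_of_irrational hx m k, hlt⟩
  obtain ⟨K, hK⟩ := eventually_atTop.1 hlarge
  obtain ⟨ε, hε, hεpos⟩ :=
    ((hx.eventually_forall_le_dist_cast_div_of_denom_le K).filter_mono nhdsWithin_le_nhds
      |>.and (self_mem_nhdsWithin (s := Ioi (0 : ℝ)))).exists
  refine ⟨min ε 1, lt_min hεpos one_pos, fun k m hk => ?_⟩
  rcases le_total k K with hkK | hKk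
  · calc min ε 1 ≤ ε := min_le_left _ _
      _ ≤ |x - m / k| := hε k hkK m
      _ ≤ |x - m / k| * (k : ℝ) ^ p :=
        le_mul_of_one_le_right (abs_nonneg _)
          (Real.one_le_rpow (by exact_mod_cast hk) (by linarith))
  · exact (min_le_right _ _).trans (hK k hKk m)

lemma tendsto_div_two_mul_of_le {α : Type*} {l : Filter α} {u v : α → ℝ} (hv : Tendsto v l atTop)
    (hupper : ∀ᶠ i in l, u i ≤ 2 * v i)
    (hlower : ∀ p > 2, ∃ C, ∀ᶠ i in l, p * v i - C ≤ (p - 1) * u i) :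
    Tendsto (fun i => u i / (2 * v i)) l (nhds 1) := by
  refine tendsto_order.2 ⟨fun r hr => ?_, fun r hr => ?_⟩
  · obtain ⟨p, hpr, hp⟩ : ∃ p : ℝ, 2 * r * (p - 1) < p ∧ 2 < p := by
      have hcont : Continuous fun p : ℝ => p - 2 * r * (p - 1) := by fun_prop
      have hnear := (hcont.tendsto 2).eventually (lt_mem_nhds (a := 0) (by linarith))
      obtain ⟨p, hpr, hp⟩ := ((hnear.filter_mono nhdsWithin_le_nhds).and
        (self_mem_nhdsWithin (s := Ioi 2))).exists
      exact ⟨p, sub_pos.1 hpr, hp⟩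
    obtain ⟨C, hC⟩ := hlower p hp
    have hlarge := (hv.const_mul_atTop (sub_pos.2 hpr)).eventually_gt_atTop C
    filter_upwards [hC, hlarge, hv.eventually_gt_atTop 0] with i hCi hlargei hvi
    rw [lt_div_iff₀ (by linarith)]
    refine lt_of_mul_lt_mul_left ?_ (by linarith : 0 ≤ p - 1)
    linarith
  · filter_upwards [hupper, hv.eventually_gt_atTop 0] with i hui hvi
    exact ((div_le_one (by linarith)).2 hui).trans_lt hr

lemma tendsto_log_natCast_add_one_div_log :
    Tendsto (fun n : ℕ => Real.log (n + 1) / Real.log n) atTop (nhds 1) := by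
  have hlog : Tendsto (fun n : ℕ => Real.log n) atTop atTop :=
    Real.tendsto_log_atTop.comp tendsto_natCast_atTop_atTop
  have hquot := (Real.tendsto_log_nat_add_one_sub_log.div_atTop hlog).const_add 1
  rw [add_zero] at hquot
  refine hquot.congr' ?_
  filter_upwards [hlog.eventually_ne_atTop 0] with n hn
  field_simp
  ring

theorem tendsto_neg_log_volume_fareyInterval_of_not_liouvilleWith {x : ℝ} (hx : Irrational x)
    (hx01 : x ∈ Ioo 0 1) (hL : ∀ p > 2, ¬ LiouvilleWith p x) :
    Tendsto (fun n : ℕ => -Real.log ((volume (fareyInterval n x)).toReal) / (2 * Real.log n))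
      atTop (nhds 1) := by
  have hlog : Tendsto (fun n : ℕ => Real.log ((n : ℝ) + 1)) atTop atTop :=
    Real.tendsto_log_atTop.comp
      (tendsto_natCast_atTop_atTop.atTop_add (tendsto_const_nhds (x := (1 : ℝ))))
  have hratio := tendsto_div_two_mul_of_le hlog
    (.of_forall (neg_log_toReal_volume_fareyInterval_le hx hx01)) fun p hp => by
      obtain ⟨C, hC, hdist⟩ := exists_forall_le_abs_sub_mul_rpow_of_not_liouvilleWith hx (hL p hp)
      exact ⟨_, .of_forall
        (le_neg_log_toReal_volume_fareyInterval hx hx01 (by linarith) hC hdist)⟩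
  have hprod := hratio.mul tendsto_log_natCast_add_one_div_log
  rw [one_mul] at hprod
  refine hprod.congr' ?_
  filter_upwards [hlog.eventually_ne_atTop 0] with n hn
  field_simp

/-- The Farey sequence of partitions is a.e. log-balanced with respect to the Lebesgue
measure on `[0,1]` with weight function `f_ℱ(n) = 2 log n`. -/
theorem farey_logBalanced_ae :
    ∀ᵐ x ∂(volume.restrict (Set.Icc (0 : ℝ) 1)),
      Tendsto (fun n : ℕ =>
          -Real.log ((volume (fareyInterval n x)).toReal) / (2 * Real.log n))
        atTop (nhds 1) := by
  have hirrational : ∀ᵐ x : ℝ, Irrational x := (countable_range ((↑) : ℚ → ℝ)).ae_notMem volume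
  rw [ae_restrict_iff' measurableSet_Icc]
  filter_upwards [hirrational, ae_not_liouvilleWith] with x hx hL hx01
  have hx0 : 0 < x := hx01.1.lt_of_ne (by simpa using (hx.ne_nat 0).symm)
  have hx1 : x < 1 := hx01.2.lt_of_ne (by simpa using hx.ne_nat 1)
  exact tendsto_neg_log_volume_fareyInterval_of_not_liouvilleWith hx ⟨hx0, hx1⟩ hL
end
end
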